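/- arXiv:1910.04552 — 4 statements merged into one kernel-verified Lean document; each statement's English description precedes it below -/
import Mathlib

section
/- Let n ≥ 4 and let G be a 'special' graph of order n, that is, G consists of a cycle C_{n−1} together with one additional vertex z ∉ V(C_{n−1}) which is adjacent to exactly two vertices of C_{n−1}. Then N(G) > n² − n + 1 = N(C_n). -/
/-!
Every connected induced subgraph of a cycle `C_m` is either the whole cycle or an arc determined
by its starting point (`m` choices) and its length (between `1` and `m - 1`), which gives
`m (m - 1) + 1 = m ^ 2 - m + 1` of them. The classification holds because a proper nonempty
connected set `S` has a point `s ∈ S` whose predecessor is not in `S`, and the maximal run of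
consecutive points of `S` starting at `s` is closed under adjacency inside `S`.

For the special graph on `C_m` and `z`, with `n = m + 1`, the arcs of `C_m` already give
`m ^ 2 - m + 1` connected sets avoiding `z`. Among those containing `z` there are: `{z}` alone,
`z` with the whole cycle, `z` with one of the `2 (m - 1)` proper arcs starting at `x` or `v`, and
`z` with one further arc of length two, which ends at `x` or at `v` and starts at neither. The total
`(m ^ 2 - m + 1) + (2 m + 1) = m ^ 2 + m + 2` exceeds `n ^ 2 - n + 1 = m ^ 2 + m + 1`.
-/

/-- The number of connected induced subgraphs of `G`: the number of nonempty vertex subsets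
inducing a connected subgraph. -/
noncomputable def numCIS {V : Type*} (G : SimpleGraph V) : ℕ :=
  Nat.card {S : Set V | S.Nonempty ∧ (G.induce S).Connected}

/-- The cycle on `m` vertices. -/
def cycGraph (m : ℕ) : SimpleGraph (Fin m) :=
  SimpleGraph.fromRel (fun a b => b.val = (a.val + 1) % m)

/-- The `special` graph of order `n`: a cycle `C_{n-1}` together with an extra vertex `z`
(the `Unit` summand) adjacent to exactly the two (distinct) vertices `x` and `v` of the
cycle. -/
def specialGraph (n : ℕ) (x v : Fin (n - 1)) : SimpleGraph (Fin (n - 1) ⊕ Unit) :=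
  SimpleGraph.fromRel (fun a b =>
    match a, b with
    | Sum.inl a, Sum.inl b => b.val = (a.val + 1) % (n - 1)
    | Sum.inl a, Sum.inr _ => a = x ∨ a = v
    | _, _ => False)

/-! ### Arcs of a cycle -/

open SimpleGraph in
/-- A connected vertex set stays connected when a neighbour of one of its points is added. -/
lemma connected_induce_insert {V : Type*} {G : SimpleGraph V} {S : Set V} {a b : V}
    (hS : (G.induce S).Connected) (ha : a ∈ S) (hab : G.Adj a b) :
    (G.induce (insert b S)).Connected := by
  have h1 := connected_induce_union (v := a) (w := b) (t := {b}) hS.preconnected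
    (by rw [induce_singleton_eq_top]; exact preconnected_top) ha rfl hab
  rwa [Set.union_comm, Set.singleton_union] at h1

lemma cycGraph_adj {m : ℕ} (hm : 2 ≤ m) (a b : Fin m) :
    (cycGraph m).Adj a b ↔
      (a.val + 1 = b.val ∨ (a.val + 1 = m ∧ b.val = 0)) ∨
      (b.val + 1 = a.val ∨ (b.val + 1 = m ∧ a.val = 0)) := by
  have key : ∀ a b : Fin m, b.val = (a.val + 1) % m ↔
      (a.val + 1 = b.val ∨ (a.val + 1 = m ∧ b.val = 0)) := by
    intro a b
    have ha := a.isLt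
    have hb := b.isLt
    rcases Nat.lt_or_ge (a.val + 1) m with h | h
    · rw [Nat.mod_eq_of_lt h]; omega
    · have h' : a.val + 1 = m := by omega
      rw [h', Nat.mod_self]; omega
  unfold cycGraph
  rw [SimpleGraph.fromRel_adj, key, key, Ne, Fin.ext_iff]
  omega

/-- The arc of `C_m` formed by the `l` consecutive vertices `s, s + 1, …, s + l - 1` modulo `m`.
It is written without `%`: the second alternative is the part that wraps around `0`. Intended for
`l ≤ m`. -/
def arc (m : ℕ) (s : Fin m) (l : ℕ) : Set (Fin m) :=
  {b | (s.val ≤ b.val ∧ b.val < s.val + l) ∨ b.val + m < s.val + l}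

lemma mem_arc {m : ℕ} {s b : Fin m} {l : ℕ} :
    b ∈ arc m s l ↔ (s.val ≤ b.val ∧ b.val < s.val + l) ∨ b.val + m < s.val + l := Iff.rfl

lemma exists_pred {m : ℕ} (s : Fin m) :
    ∃ p : Fin m, p.val + 1 = s.val ∨ (p.val + 1 = m ∧ s.val = 0) := by
  have := s.isLt
  rcases Nat.eq_zero_or_pos s.val with h | h
  · exact ⟨⟨m - 1, by omega⟩, by simp only; omega⟩
  · exact ⟨⟨s.val - 1, by omega⟩, by simp only; omega⟩

/-- The witness is the vertex `s + l` modulo `m`. -/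
lemma exists_shift {m : ℕ} (s : Fin m) {l : ℕ} (hl : l ≤ m) :
    ∃ p : Fin m, p.val = s.val + l ∨ p.val + m = s.val + l := by
  have := s.isLt
  rcases Nat.lt_or_ge (s.val + l) m with h | h
  · exact ⟨⟨s.val + l, h⟩, by simp⟩
  · exact ⟨⟨s.val + l - m, by omega⟩, by simp only; omega⟩

lemma arc_injective {m : ℕ} {s t : Fin m} {k l : ℕ} (hk : 1 ≤ k) (hk' : k < m)
    (hl : 1 ≤ l) (hl' : l < m) (h : arc m s k = arc m t l) : s = t ∧ k = l := by
  have hmem : ∀ b : Fin m, _ ↔ _ := fun b => (Set.ext_iff.1 h b)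
  simp only [mem_arc] at hmem
  have hs := s.isLt
  have ht := t.isLt
  -- The starting point is the only point of a proper arc whose predecessor is outside.
  have hst : s = t := by
    obtain ⟨p, hp⟩ := exists_pred s
    have h1 := hmem s
    have h3 := hmem p
    have := p.isLt
    ext
    omega
  subst hst
  refine ⟨rfl, ?_⟩
  obtain ⟨p, hp⟩ := exists_shift s hk'.le
  obtain ⟨q, hq⟩ := exists_shift s hl'.le
  have h1 := hmem p
  have h2 := hmem q
  have := p.isLt
  have := q.isLt
  omega

lemma arc_ne_univ {m : ℕ} {s : Fin m} {l : ℕ} (hl' : l < m) : arc m s l ≠ Set.univ := by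
  intro h
  obtain ⟨p, hp⟩ := exists_shift s hl'.le
  have h1 : p ∈ arc m s l := h ▸ Set.mem_univ p
  rw [mem_arc] at h1
  have := p.isLt
  have := s.isLt
  omega

lemma arc_self_eq_univ {m : ℕ} (s : Fin m) : arc m s m = Set.univ := by
  ext b
  have := b.isLt
  have := s.isLt
  simp only [mem_arc, Set.mem_univ, iff_true]
  omega

/-- Arcs are connected, in any graph containing a homomorphic copy of the cycle. -/
lemma connected_image_arc {m : ℕ} (hm : 2 ≤ m) {V : Type*} {H : SimpleGraph V} (f : Fin m → V)
    (hf : ∀ a b, (cycGraph m).Adj a b → H.Adj (f a) (f b)) (s : Fin m) {l : ℕ} (hl : 1 ≤ l)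
    (hl' : l ≤ m) : (H.induce (f '' arc m s l)).Connected := by
  induction l, hl using Nat.le_induction with
  | base =>
    have : arc m s 1 = {s} := by
      ext b
      have := b.isLt
      have := s.isLt
      rw [mem_arc, Set.mem_singleton_iff, Fin.ext_iff]
      omega
    rw [this, Set.image_singleton]
    simp
  | succ l hl ih =>
    obtain ⟨p, hp⟩ := exists_shift s (l := l) (by omega)
    obtain ⟨q, hq⟩ := exists_pred p
    have := p.isLt
    have := q.isLt
    have := s.isLt
    have h1 : arc m s (l + 1) = insert p (arc m s l) := by
      ext b
      have := b.isLt
      rw [Set.mem_insert_iff, mem_arc, mem_arc, Fin.ext_iff]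
      omega
    rw [h1, Set.image_insert_eq]
    refine connected_induce_insert (ih (by omega)) (Set.mem_image_of_mem f (show q ∈ arc m s l from ?_))
      (hf q p ?_)
    · rw [mem_arc]; omega
    · rw [cycGraph_adj hm]; omega

/-! ### Connected sets of a cycle are arcs -/

/-- A subset of a connected vertex set that is closed under adjacency within it is everything. -/
lemma subset_of_closed {V : Type*} {G : SimpleGraph V} {S A : Set V} {s : V}
    (hS : (G.induce S).Connected) (hs : s ∈ S) (hsA : s ∈ A)
    (hA : ∀ a ∈ A, ∀ b ∈ S, G.Adj a b → b ∈ A) : S ⊆ A := by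
  intro t ht
  obtain ⟨w⟩ := hS.preconnected ⟨s, hs⟩ ⟨t, ht⟩
  have key : ∀ (u w : S), (G.induce S).Walk u w → u.val ∈ A → w.val ∈ A := by
    intro u w p
    induction p with
    | nil => exact id
    | cons hadj _ ih => exact fun hu => ih (hA _ hu _ (Subtype.prop _) hadj)
  exact key _ _ w hsA

/-- A proper nonempty connected vertex set of a cycle is an arc. -/
lemma exists_eq_arc {m : ℕ} (hm : 2 ≤ m) {S : Set (Fin m)} (hne : S.Nonempty)
    (hS : ((cycGraph m).induce S).Connected) (hu : S ≠ Set.univ) :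
    ∃ s l, 1 ≤ l ∧ l < m ∧ arc m s l = S := by
  have hstart : ∃ s ∈ S, ∃ p ∉ S, p.val + 1 = s.val ∨ (p.val + 1 = m ∧ s.val = 0) := by
    by_contra! hcon
    have hpred : ∀ s ∈ S, ∀ p : Fin m,
        (p.val + 1 = s.val ∨ (p.val + 1 = m ∧ s.val = 0)) → p ∈ S := by
      intro s hs p hp
      by_contra hpS
      have := hcon s hs p hpS
      omega
    obtain ⟨t, ht⟩ := hne
    have hdown : ∀ d : ℕ, ∀ s ∈ S, ∀ p : Fin m, p.val + d = s.val → p ∈ S := by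
      intro d
      induction d with
      | zero =>
        intro s hs p hp
        have : p = s := by ext; omega
        exact this ▸ hs
      | succ d ih =>
        intro s hs p hp
        obtain ⟨q, hq⟩ := exists_pred s
        have := q.isLt
        exact ih q (hpred s hs q hq) p (by omega)
    have h0 : (⟨0, by omega⟩ : Fin m) ∈ S := hdown t.val t ht _ (by simp)
    have hlast : (⟨m - 1, by omega⟩ : Fin m) ∈ S := hpred _ h0 _ (by simp only [and_true]; omega)
    exact hu (Set.eq_univ_of_forall fun p =>
      hdown (m - 1 - p.val) _ hlast p (by have := p.isLt; simp only; omega))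
  obtain ⟨s, hs, p, hp, hps⟩ := hstart
  have hsm := s.isLt
  have hpm := p.isLt
  -- `l` is the length of the maximal run of consecutive points of `S` starting at `s`.
  have hex : ∃ l, ∃ q : Fin m, q ∉ S ∧ (q.val = s.val + l ∨ q.val + m = s.val + l) :=
    ⟨m - 1, p, hp, by omega⟩
  classical
  obtain ⟨q, hq, hql⟩ := Nat.find_spec hex
  have hmin : ∀ k < Nat.find hex, ∀ b : Fin m,
      (b.val = s.val + k ∨ b.val + m = s.val + k) → b ∈ S := by
    intro k hk b hb
    by_contra hbS
    exact Nat.find_min hex hk ⟨b, hbS, hb⟩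
  have hlt : Nat.find hex ≤ m - 1 := Nat.find_min' hex ⟨p, hp, by omega⟩
  generalize Nat.find hex = l at hql hmin hlt
  have hqm := q.isLt
  have hl1 : 1 ≤ l := by
    by_contra h0
    have : q = s := by ext; omega
    exact hq (this ▸ hs)
  refine ⟨s, l, hl1, by omega, Set.Subset.antisymm ?_ ?_⟩
  · intro b hb
    rw [mem_arc] at hb
    have hbm := b.isLt
    rcases hb with hb | hb
    · exact hmin (b.val - s.val) (by omega) b (by omega)
    · exact hmin (b.val + m - s.val) (by omega) b (by omega)
  · refine subset_of_closed hS hs (by rw [mem_arc]; omega) ?_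
    intro a ha b hb hab
    have hbp : b.val ≠ p.val := fun h => hp (Fin.ext h ▸ hb)
    have hbq : b.val ≠ q.val := fun h => hq (Fin.ext h ▸ hb)
    rw [cycGraph_adj hm] at hab
    rw [mem_arc] at ha ⊢
    have := a.isLt
    have := b.isLt
    omega

/-! ### Counting arcs -/

/-- The proper arcs with (start, length) in `I`, together with the whole cycle. -/
def arcFamily (m : ℕ) (I : Finset (Fin m × ℕ)) : Set (Set (Fin m)) :=
  insert Set.univ ((fun q : Fin m × ℕ => arc m q.1 q.2) '' (I : Set (Fin m × ℕ)))

lemma ncard_arcFamily {m : ℕ} {I : Finset (Fin m × ℕ)} (hI : ∀ q ∈ I, 1 ≤ q.2 ∧ q.2 < m) :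
    (arcFamily m I).ncard = I.card + 1 := by
  unfold arcFamily
  rw [Set.ncard_insert_of_notMem, Set.InjOn.ncard_image, Set.ncard_coe_finset]
  · intro q hq r hr h
    have h1 := hI q hq
    have h2 := hI r hr
    have := arc_injective h1.1 h1.2 h2.1 h2.2 h
    exact Prod.ext this.1 this.2
  · rintro ⟨q, hq, h⟩
    exact arc_ne_univ (hI q hq).2 h

/-- The parameters of all proper arcs. -/
def allArcs (m : ℕ) : Finset (Fin m × ℕ) := Finset.univ ×ˢ Finset.Ico 1 m

lemma mem_allArcs {m : ℕ} (q : Fin m × ℕ) : q ∈ allArcs m ↔ 1 ≤ q.2 ∧ q.2 < m := by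
  simp [allArcs]

lemma ncard_allArcs (m : ℕ) : (arcFamily m (allArcs m)).ncard = m * (m - 1) + 1 := by
  rw [ncard_arcFamily fun q hq => (mem_allArcs q).1 hq]
  simp [allArcs]

lemma numCIS_cycGraph {m : ℕ} (hm : 2 ≤ m) : numCIS (cycGraph m) = m * (m - 1) + 1 := by
  rw [← ncard_allArcs, numCIS, Nat.card_coe_set_eq]
  congr 1
  have hconn : ∀ s l, 1 ≤ l → l ≤ m → ((cycGraph m).induce (arc m s l)).Connected := by
    intro s l hl hl'
    have h := connected_image_arc hm id (fun _ _ h => h) s hl hl'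
    rwa [Set.image_id] at h
  ext S
  constructor
  · rintro ⟨hne, hS⟩
    by_cases hu : S = Set.univ
    · exact Or.inl hu
    · obtain ⟨s, l, h1, h2, h⟩ := exists_eq_arc hm hne hS hu
      exact Or.inr ⟨(s, l), (mem_allArcs _).2 ⟨h1, h2⟩, h⟩
  · rintro (rfl | ⟨q, hq, rfl⟩)
    · rw [← arc_self_eq_univ ⟨0, by omega⟩]
      have h := hconn ⟨0, by omega⟩ m (by omega) le_rfl
      exact ⟨Set.nonempty_coe_sort.1 h.nonempty, h⟩
    · have hq' := (mem_allArcs q).1 hq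
      have h := hconn q.1 q.2 hq'.1 hq'.2.le
      exact ⟨Set.nonempty_coe_sort.1 h.nonempty, h⟩

/-! ### The special graph -/

lemma specialGraph_adj_inl {m : ℕ} (x v a b : Fin m) (h : (cycGraph m).Adj a b) :
    (specialGraph (m + 1) x v).Adj (Sum.inl a) (Sum.inl b) := by
  unfold cycGraph at h
  unfold specialGraph
  rw [SimpleGraph.fromRel_adj] at h ⊢
  exact ⟨fun h' => h.1 (Sum.inl.inj h'), h.2⟩

lemma specialGraph_adj_inr {m : ℕ} (x v a : Fin m) (h : a = x ∨ a = v) :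
    (specialGraph (m + 1) x v).Adj (Sum.inl a) (Sum.inr ()) := by
  unfold specialGraph
  rw [SimpleGraph.fromRel_adj]
  exact ⟨Sum.inl_ne_inr, Or.inl h⟩

/-- A length-two arc that contains `x` or `v` but starts at neither. On a cycle with at least three
vertices `x` and `v` cannot both precede each other. -/
lemma exists_extra_arc {m : ℕ} (hm : 3 ≤ m) (x v : Fin m) (hxv : x ≠ v) :
    ∃ e, e ≠ x ∧ e ≠ v ∧ (x ∈ arc m e 2 ∨ v ∈ arc m e 2) := by
  obtain ⟨p, hp⟩ := exists_pred x
  obtain ⟨q, hq⟩ := exists_pred v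
  have := p.isLt
  have := q.isLt
  have := x.isLt
  have := v.isLt
  simp only [mem_arc, ne_eq, Fin.ext_iff] at hxv ⊢
  by_cases h : p.val = v.val
  · exact ⟨q, by omega, by omega, by omega⟩
  · exact ⟨p, by omega, h, by omega⟩

lemma lt_numCIS_specialGraph {m : ℕ} (hm : 3 ≤ m) (x v : Fin m) (hxv : x ≠ v) :
    m ^ 2 + m + 1 < numCIS (specialGraph (m + 1) x v) := by
  have hm2 : 2 ≤ m := by omega
  have hconn : ∀ s l, 1 ≤ l → l ≤ m →
      ((specialGraph (m + 1) x v).induce (Sum.inl '' arc m s l)).Connected :=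
    fun s l => connected_image_arc hm2 Sum.inl (specialGraph_adj_inl x v) s
  have hconnz : ∀ s l, 1 ≤ l → l ≤ m → (x ∈ arc m s l ∨ v ∈ arc m s l) →
      ((specialGraph (m + 1) x v).induce
        (insert (Sum.inr ()) (Sum.inl '' arc m s l))).Connected := by
    rintro s l h1 h2 (h | h)
    · exact connected_induce_insert (hconn s l h1 h2) (Set.mem_image_of_mem _ h)
        (specialGraph_adj_inr x v x (Or.inl rfl))
    · exact connected_induce_insert (hconn s l h1 h2) (Set.mem_image_of_mem _ h)
        (specialGraph_adj_inr x v v (Or.inr rfl))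
  obtain ⟨e, hex, hev, he⟩ := exists_extra_arc hm x v hxv
  let I : Finset (Fin m × ℕ) := insert (e, 2) (({x, v} : Finset (Fin m)) ×ˢ Finset.Ico 1 m)
  have hI : ∀ q ∈ I, (1 ≤ q.2 ∧ q.2 < m) ∧ (x ∈ arc m q.1 q.2 ∨ v ∈ arc m q.1 q.2) := by
    intro q hq
    simp only [I, Finset.mem_insert, Finset.mem_product, Finset.mem_singleton,
      Finset.mem_Ico] at hq
    rcases hq with rfl | ⟨h1, h2⟩
    · exact ⟨⟨by simp, by simp only; omega⟩, he⟩
    · refine ⟨h2, h1.imp ?_ ?_⟩ <;>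
      · rintro h
        rw [h, mem_arc]; omega
  have hIcard : I.card = 2 * (m - 1) + 1 := by
    rw [Finset.card_insert_of_notMem, Finset.card_product, Finset.card_pair hxv, Nat.card_Ico]
    simp [hex, hev]
  -- Connected sets without `z`, and the traces on the cycle of connected sets with `z`.
  let A := arcFamily m (allArcs m)
  let B := insert ∅ (arcFamily m I)
  let f : Set (Fin m) → Set (Fin m ⊕ Unit) := fun S => Sum.inl '' S
  let g : Set (Fin m) → Set (Fin m ⊕ Unit) := fun S => insert (Sum.inr ()) (Sum.inl '' S)
  have hf : f.Injective := Set.image_injective.2 Sum.inl_injective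
  have hg : g.Injective := by
    intro S T h
    ext a
    have := Set.ext_iff.1 h (Sum.inl a)
    simpa [g] using this
  have hdisj : Disjoint (f '' A) (g '' B) := by
    rw [Set.disjoint_left]
    rintro _ ⟨S, -, rfl⟩ ⟨T, -, h⟩
    have : Sum.inr () ∈ f S := h ▸ Set.mem_insert _ _
    simp [f] at this
  have hB : B.ncard = 2 * m + 1 := by
    rw [Set.ncard_insert_of_notMem, ncard_arcFamily fun q hq => (hI q hq).1, hIcard]
    · omega
    · rintro (h | ⟨q, hq, h⟩)
      · exact (Set.eq_empty_iff_forall_notMem.1 h.symm x) trivial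
      · have h' : arc m q.1 q.2 = ∅ := h
        have := (hI q hq).2
        simp [h'] at this
  have hsub : f '' A ∪ g '' B ⊆
      {S | S.Nonempty ∧ ((specialGraph (m + 1) x v).induce S).Connected} := by
    suffices ∀ S ∈ f '' A ∪ g '' B, ((specialGraph (m + 1) x v).induce S).Connected from
      fun S hS => ⟨Set.nonempty_coe_sort.1 (this S hS).nonempty, this S hS⟩
    rintro _ (⟨S, (rfl | ⟨q, hq, rfl⟩), rfl⟩ | ⟨S, (rfl | rfl | ⟨q, hq, rfl⟩), rfl⟩)
    · rw [← arc_self_eq_univ x]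
      exact hconn x m (by omega) le_rfl
    · have hq' := (mem_allArcs q).1 hq
      exact hconn q.1 q.2 hq'.1 hq'.2.le
    · have h : g ∅ = {Sum.inr ()} := by simp [g]
      rw [h]
      simp
    · rw [← arc_self_eq_univ x]
      exact hconnz x m (by omega) le_rfl (Or.inl (by rw [arc_self_eq_univ]; trivial))
    · have hq' := hI q hq
      exact hconnz q.1 q.2 hq'.1.1 hq'.1.2.le hq'.2
  have hle := Set.ncard_le_ncard hsub (Set.toFinite _)
  rw [Set.ncard_union_eq hdisj (Set.toFinite _) (Set.toFinite _),
    Set.ncard_image_of_injective _ hf, Set.ncard_image_of_injective _ hg, hB,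
    ncard_allArcs] at hle
  rw [numCIS, Nat.card_coe_set_eq]
  refine lt_of_lt_of_le ?_ hle
  obtain ⟨k, rfl⟩ : ∃ k, m = k + 1 := ⟨m - 1, by omega⟩
  rw [Nat.add_sub_cancel]
  nlinarith

theorem stmt_8 (n : ℕ) (hn : 4 ≤ n) (x v : Fin (n - 1)) (hxv : x ≠ v) :
    n ^ 2 - n + 1 < numCIS (specialGraph n x v) ∧
    numCIS (cycGraph n) = n ^ 2 - n + 1 := by
  have hsq : n ^ 2 - n = n * (n - 1) := by rw [Nat.mul_sub, mul_one, sq]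
  refine ⟨?_, by rw [numCIS_cycGraph (by omega), hsq]⟩
  obtain ⟨m, rfl⟩ : ∃ m, n = m + 1 := ⟨n - 1, by omega⟩
  have h := lt_numCIS_specialGraph (m := m) (by omega) x v hxv
  have h' : (m + 1) ^ 2 - (m + 1) + 1 = m ^ 2 + m + 1 := by
    rw [hsq, Nat.add_sub_cancel]; ring
  exact h'.trans_lt h
end

section
/- Let n ≥ 5 and 0 ≤ p ≤ n − 2, and let G be a connected graph with n vertices of which exactly p are pendant. If p < n − 2, then N(G) ≤ 2^{n−1} + 2^{n−p−1} + p − 1, with equality if and only if G is obtained by identifying one vertex of the complete graph K_{n−p} with the central vertex of the star S_{p+1}. If p = n − 2, then N(G) ≤ n + 3·2^{n−3}, with equality if and only if G is obtained by inserting one vertex into an edge of the star S_{n−1} (i.e., subdividing one edge of S_{n−1}). -/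
/-- The number of pendant vertices (vertices of degree `1`) of `G`. -/
noncomputable def numPendant {V : Type*} (G : SimpleGraph V) : ℕ :=
  Nat.card {v : V | Nat.card (G.neighborSet v) = 1}

/-- The graph of order `n` obtained by identifying one vertex of the complete graph `K_{n-p}`
(on the vertices `0, …, n-p-1`) with the central vertex of the star `S_{p+1}`; that is,
`p` pendant vertices are attached to the vertex `0` of `K_{n-p}`. -/
def cliqueStar (n p : ℕ) : SimpleGraph (Fin n) :=
  SimpleGraph.fromRel (fun a b =>
    (a.val < n - p ∧ b.val < n - p) ∨ (a.val = 0 ∧ n - p ≤ b.val))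

/-- The graph of order `n` obtained by inserting one vertex into an edge of the star
`S_{n-1}` (i.e. by subdividing one edge): the centre `0` is adjacent to `1, …, n-2`, and the
vertex `n-1` is adjacent to `1`. -/
def subdivStar (n : ℕ) : SimpleGraph (Fin n) :=
  SimpleGraph.fromRel (fun a b =>
    (a.val = 0 ∧ 1 ≤ b.val ∧ b.val ≤ n - 2) ∨ (a.val = 1 ∧ b.val = n - 1))

/-! ### Pendant vertices and their neighbours -/

/-- `PendantData G P f`: `P` is the set of pendant vertices of `G`, the map `f` sends every vertex
to one of its neighbours (the only one, on `P`), and no two pendant vertices are adjacent. -/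
structure PendantData {V : Type*} (G : SimpleGraph V) (P : Finset V) (f : V → V) : Prop where
  adj : ∀ x, G.Adj x (f x)
  uniq : ∀ x ∈ P, ∀ y, G.Adj x y → y = f x
  mem : ∀ x, (∀ y, G.Adj x y → y = f x) → x ∈ P
  not_mem : ∀ x ∈ P, f x ∉ P

section
open Finset
set_option linter.unusedSectionVars false

/-- In a connected graph, a set closed under adjacency that contains a vertex is everything. -/
lemma mem_of_closed {V : Type*} {G : SimpleGraph V} (h : G.Connected) {A : V → Prop}
    (hA : ∀ x y, A x → G.Adj x y → A y) {u : V} (hu : A u) (v : V) : A v := by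
  obtain ⟨w⟩ := h.preconnected u v
  induction w with
  | nil => exact hu
  | cons hadj _ ih => exact ih (hA _ _ hu hadj)

lemma exists_pendantData {V : Type*} [Fintype V] {G : SimpleGraph V} (h : G.Connected)
    (h3 : 3 ≤ Fintype.card V) :
    ∃ (P : Finset V) (f : V → V), PendantData G P f ∧ #P = numPendant G := by
  classical
  have : Nontrivial V := Fintype.one_lt_card_iff_nontrivial.1 (by omega)
  choose f hf using fun x => h.preconnected.exists_adj_of_nontrivial x
  have key : ∀ x, Nat.card (G.neighborSet x) = 1 ↔ ∀ y, G.Adj x y → y = f x := by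
    intro x
    rw [Nat.card_eq_one_iff_exists]
    constructor
    · rintro ⟨a, ha⟩ y hy
      have h1 := ha ⟨y, hy⟩
      have h2 := ha ⟨f x, hf x⟩
      exact congrArg Subtype.val (h1.trans h2.symm)
    · intro hy
      exact ⟨⟨f x, hf x⟩, fun b => Subtype.ext (hy _ b.2)⟩
  refine ⟨univ.filter (fun v => Nat.card (G.neighborSet v) = 1), f, ⟨hf, ?_, ?_, ?_⟩, ?_⟩
  · intro x hx
    exact (key x).1 (by simpa using hx)
  · intro x hx
    simpa using (key x).2 hx
  · intro x hx hfx
    have hx := (key x).1 (by simpa using hx)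
    have hfx := (key (f x)).1 (by simpa using hfx)
    have e : x = f (f x) := hfx x (hf x).symm
    -- two adjacent pendant vertices would form a whole component
    have all : ∀ v, v = x ∨ v = f x := by
      refine mem_of_closed h (A := fun v => v = x ∨ v = f x) (u := x) ?_ (Or.inl rfl)
      rintro a b (rfl | rfl) hab
      · exact Or.inr (hx _ hab)
      · left; rw [e]; exact hfx _ hab
    have : (univ : Finset V) ⊆ {x, f x} := fun v _ => by simpa using all v
    have := (card_le_card this).trans card_le_two
    rw [card_univ] at this
    omega
  · unfold numPendant
    rw [Nat.card_eq_fintype_card, Fintype.card_subtype]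
    rfl

variable {V : Type*} [Fintype V] [DecidableEq V]

/-! ### Counting the candidates for connected sets -/

/-- The number of pendant vertices attached to a vertex of `T`. -/
def attached (P : Finset V) (f : V → V) (T : Finset V) : ℕ := #(P.filter (fun x => f x ∈ T))

/-- The sets containing, along with each of their pendant vertices, its neighbour. -/
def closedSets (P : Finset V) (f : V → V) : Finset (Finset V) :=
  univ.filter (fun S => ∀ x ∈ S, x ∈ P → f x ∈ S)

/-- A closed set is a set `T` of non-pendant vertices together with an arbitrary set of pendant
vertices attached to `T`. -/
lemma card_closedSets {P : Finset V} {f : V → V} (hn : ∀ x ∈ P, f x ∉ P) :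
    #(closedSets P f) = ∑ T ∈ (Pᶜ).powerset, 2 ^ attached P f T := by
  rw [card_eq_sum_card_fiberwise (f := fun S => S \ P) (t := (Pᶜ).powerset)]
  · refine sum_congr rfl fun T hT => ?_
    rw [attached, ← card_powerset]
    have hT : ∀ x ∈ T, x ∉ P := fun x hx => by simpa using (mem_powerset.1 hT) hx
    apply card_nbij' (fun S => S ∩ P) (fun U => T ∪ U)
    · intro S hS
      simp only [closedSets, coe_filter, mem_filter, mem_univ, true_and, Set.mem_ofPred_eq] at hS
      obtain ⟨h1, rfl⟩ := hS
      simp only [coe_powerset, Set.mem_preimage, Set.mem_powerset_iff, coe_subset]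
      intro x hx
      simp only [mem_inter, mem_filter, mem_sdiff] at *
      exact ⟨hx.2, h1 x hx.1 hx.2, hn x hx.2⟩
    · intro U hU
      simp only [coe_powerset, Set.mem_preimage, Set.mem_powerset_iff, coe_subset] at hU
      have hU' : ∀ x ∈ U, x ∈ P ∧ f x ∈ T := fun x hx => by simpa using hU hx
      simp only [closedSets, coe_filter, mem_filter, mem_univ, true_and, Set.mem_ofPred_eq]
      constructor
      · intro x hx hxP
        rcases mem_union.1 hx with hx | hx
        · exact absurd hxP (hT x hx)
        · exact mem_union_left _ (hU' x hx).2
      · ext x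
        have := hT x
        have := hU' x
        simp only [mem_sdiff, mem_union]
        tauto
    · intro S hS
      simp only [closedSets, coe_filter, mem_filter, mem_univ, true_and, Set.mem_ofPred_eq] at hS
      obtain ⟨h1, rfl⟩ := hS
      ext x
      simp only [mem_union, mem_inter, mem_sdiff]
      tauto
    · intro U hU
      simp only [coe_powerset, Set.mem_preimage, Set.mem_powerset_iff, coe_subset] at hU
      have hU' : ∀ x ∈ U, x ∈ P ∧ f x ∈ T := fun x hx => by simpa using hU hx
      ext x
      have := hT x
      have := hU' x
      simp only [mem_union, mem_inter]
      tauto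
  · intro S _
    simp only [coe_powerset, Set.mem_preimage, Set.mem_powerset_iff, coe_subset]
    intro x hx
    simpa using (mem_sdiff.1 hx).2

/-- The sets that can be connected: nonempty closed sets and single pendant vertices. -/
def candidates (P : Finset V) (f : V → V) : Finset (Finset V) :=
  (closedSets P f).erase ∅ ∪ P.image (fun x => {x})

lemma card_candidates {G : SimpleGraph V} {P : Finset V} {f : V → V} (D : PendantData G P f) :
    #(candidates P f) + 1 = #P + ∑ T ∈ (Pᶜ).powerset, 2 ^ attached P f T := by
  have hempty : ∅ ∈ closedSets P f := by simp [closedSets]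
  rw [candidates, card_union_of_disjoint, card_image_of_injective _ singleton_injective,
    ← card_closedSets D.not_mem, ← card_erase_add_one hempty]
  · ring
  · rw [disjoint_left]
    intro S hS hS'
    obtain ⟨x, hx, rfl⟩ := mem_image.1 hS'
    have := (mem_filter.1 (mem_of_mem_erase hS)).2 x (by simp) hx
    exact (D.adj x).ne (mem_singleton.1 this).symm

/-! ### Connected sets among the candidates -/

lemma numCIS_eq_card (G : SimpleGraph V) [DecidablePred fun S : Finset V =>
      S.Nonempty ∧ (G.induce (S : Set V)).Connected] :
    numCIS G = #(univ.filter (fun S : Finset V =>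
      S.Nonempty ∧ (G.induce (S : Set V)).Connected)) := by
  classical
  rw [numCIS, ← Fintype.card_subtype, ← Nat.card_eq_fintype_card]
  refine (Nat.card_congr (Fintype.finsetEquivSet.subtypeEquiv ?_)).symm
  intro S
  simp

lemma connected_subset_candidates {G : SimpleGraph V} {P : Finset V} {f : V → V}
    (D : PendantData G P f) {S : Finset V} (hne : S.Nonempty)
    (hS : (G.induce (S : Set V)).Connected) : S ∈ candidates P f := by
  by_cases hc : ∀ x ∈ S, x ∈ P → f x ∈ S
  · exact mem_union_left _ (mem_erase.2 ⟨hne.ne_empty, by simp [closedSets]; exact hc⟩)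
  · push Not at hc
    obtain ⟨x, hxS, hxP, hfx⟩ := hc
    refine mem_union_right _ (mem_image.2 ⟨x, hxP, ?_⟩)
    -- `x` has no neighbour in `S`
    have all := mem_of_closed hS (A := fun v => v.1 = x) (u := ⟨x, hxS⟩) (by
      rintro a b ha hab
      have hab : G.Adj a.1 b.1 := hab
      rw [ha] at hab
      have := D.uniq x hxP _ hab
      exact absurd (this ▸ b.2) hfx) rfl
    ext y
    simp only [mem_singleton]
    exact ⟨fun h => h ▸ hxS, fun h => all ⟨y, h⟩⟩

lemma connected_of_candidate {G : SimpleGraph V} {P : Finset V} {f : V → V}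
    (D : PendantData G P f) (hK : ∀ x ∉ P, ∀ y ∉ P, x ≠ y → G.Adj x y) {S : Finset V}
    (hS : S ∈ candidates P f) : S.Nonempty ∧ (G.induce (S : Set V)).Connected := by
  rcases mem_union.1 hS with hS | hS
  · obtain ⟨hne, hS⟩ := mem_erase.1 hS
    have hc := (mem_filter.1 hS).2
    have hne : S.Nonempty := nonempty_iff_ne_empty.2 hne
    refine ⟨hne, ?_⟩
    obtain ⟨u, huS, huP⟩ : ∃ u ∈ S, u ∉ P := by
      obtain ⟨x, hx⟩ := hne
      by_cases h : x ∈ P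
      · exact ⟨f x, hc x hx h, D.not_mem x h⟩
      · exact ⟨x, hx, h⟩
    have main : ∀ y (hy : y ∈ S), y ∉ P →
        (G.induce (S : Set V)).Reachable ⟨u, huS⟩ ⟨y, hy⟩ := by
      intro y hy hyP
      by_cases e : u = y
      · subst e; exact SimpleGraph.Reachable.refl _
      · exact SimpleGraph.Adj.reachable (hK u huP y hyP e)
    rw [SimpleGraph.connected_iff_exists_forall_reachable]
    refine ⟨⟨u, huS⟩, ?_⟩
    rintro ⟨y, hy⟩
    by_cases hyP : y ∈ P
    · refine (main (f y) (hc y hy hyP) (D.not_mem y hyP)).trans (SimpleGraph.Adj.reachable ?_)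
      exact (D.adj y).symm
    · exact main y hy hyP
  · obtain ⟨x, -, rfl⟩ := mem_image.1 hS
    refine ⟨by simp, ?_⟩
    rw [SimpleGraph.connected_iff_exists_forall_reachable]
    refine ⟨⟨x, by simp⟩, ?_⟩
    rintro ⟨y, hy⟩
    have : y = x := by simpa using hy
    subst this
    exact SimpleGraph.Reachable.refl _

lemma numCIS_le {G : SimpleGraph V} {P : Finset V} {f : V → V} (D : PendantData G P f) :
    numCIS G ≤ #(candidates P f) := by
  classical
  rw [numCIS_eq_card]
  refine card_le_card fun S hS => ?_
  have := (mem_filter.1 hS).2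
  exact connected_subset_candidates D this.1 this.2

lemma numCIS_eq_iff {G : SimpleGraph V} {P : Finset V} {f : V → V} (D : PendantData G P f) :
    numCIS G = #(candidates P f) ↔ ∀ x ∉ P, ∀ y ∉ P, x ≠ y → G.Adj x y := by
  classical
  have hsub : univ.filter (fun S : Finset V =>
      S.Nonempty ∧ (G.induce (S : Set V)).Connected) ⊆ candidates P f := fun S hS => by
    have := (mem_filter.1 hS).2
    exact connected_subset_candidates D this.1 this.2
  constructor
  · intro h x hx y hy hxy
    rw [numCIS_eq_card] at h
    have h := eq_of_subset_of_card_le hsub h.ge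
    -- the pair `{x, y}` is closed, hence connected
    have hm : ({x, y} : Finset V) ∈ candidates P f := by
      refine mem_union_left _ (mem_erase.2 ⟨by simp, ?_⟩)
      simp [closedSets, hx, hy]
    rw [← h] at hm
    have hm := (mem_filter.1 hm).2.2
    by_contra hadj
    have := mem_of_closed hm (A := fun v => v.1 = x) (u := ⟨x, by simp⟩) (by
      rintro a ⟨b, hb⟩ ha hab
      have hab : G.Adj a.1 b := hab
      rw [ha] at hab
      rcases (by simpa using hb : b = x ∨ b = y) with h | h
      · exact h
      · exact absurd (h ▸ hab) hadj) rfl ⟨y, by simp⟩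
    exact hxy this.symm
  · intro h
    rw [numCIS_eq_card]
    refine congrArg card (hsub.antisymm fun S hS => mem_filter.2 ⟨mem_univ _, ?_⟩)
    exact connected_of_candidate D h hS

/-! ### Maximising the number of closed sets -/

lemma two_pow_add_le (a b : ℕ) : 2 ^ a + 2 ^ b ≤ 1 + 2 ^ (a + b) ∧
    (2 ^ a + 2 ^ b = 1 + 2 ^ (a + b) ↔ a = 0 ∨ b = 0) := by
  rcases Nat.eq_zero_or_pos a with rfl | ha
  · simp
  rcases Nat.eq_zero_or_pos b with rfl | hb
  · simp [add_comm]
  · have h1 : 2 ≤ 2 ^ a := Nat.le_self_pow ha.ne' 2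
    have h2 : 2 ≤ 2 ^ b := Nat.le_self_pow hb.ne' 2
    have : 2 ^ a + 2 ^ b < 1 + 2 ^ (a + b) := by
      rw [pow_add]; nlinarith
    exact ⟨this.le, by omega⟩

lemma attached_add {P : Finset V} {f : V → V} (hn : ∀ x ∈ P, f x ∉ P) (T : Finset V) :
    attached P f T + attached P f (Pᶜ \ T) = #P := by
  rw [attached, attached, ← card_filter_add_card_filter_not (s := P) (fun x => f x ∈ T)]
  congr 2
  refine filter_congr fun x hx => ?_
  simp [hn x hx]

/-- Pairing each `T` with its complement bounds the number of closed sets by convexity; the bound is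
attained exactly when all pendant vertices have the same neighbour. -/
lemma sum_attached {P : Finset V} {f : V → V} (hn : ∀ x ∈ P, f x ∉ P) (hne : (Pᶜ).Nonempty) :
    2 * ∑ T ∈ (Pᶜ).powerset, 2 ^ attached P f T ≤ 2 ^ #(Pᶜ) * (1 + 2 ^ #P) ∧
    (2 * ∑ T ∈ (Pᶜ).powerset, 2 ^ attached P f T = 2 ^ #(Pᶜ) * (1 + 2 ^ #P) ↔
      ∃ c ∉ P, ∀ x ∈ P, f x = c) := by
  have e1 : 2 * ∑ T ∈ (Pᶜ).powerset, 2 ^ attached P f T =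
      ∑ T ∈ (Pᶜ).powerset, (2 ^ attached P f T + 2 ^ attached P f (Pᶜ \ T)) := by
    rw [sum_add_distrib, two_mul]
    congr 1
    apply sum_nbij' (fun T => Pᶜ \ T) (fun T => Pᶜ \ T)
    · intro T _; simp
    · intro T _; simp
    · intro T hT; exact Finset.sdiff_sdiff_eq_self (mem_powerset.1 hT)
    · intro T hT; exact Finset.sdiff_sdiff_eq_self (mem_powerset.1 hT)
    · intro T hT; rw [Finset.sdiff_sdiff_eq_self (mem_powerset.1 hT)]
  have e2 : 2 ^ #(Pᶜ) * (1 + 2 ^ #P) = ∑ T ∈ (Pᶜ).powerset, (1 + 2 ^ #P) := by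
    rw [sum_const, card_powerset, smul_eq_mul]
  have le : ∀ T ∈ (Pᶜ).powerset, 2 ^ attached P f T + 2 ^ attached P f (Pᶜ \ T) ≤ 1 + 2 ^ #P := by
    intro T _
    rw [← attached_add hn T]
    exact (two_pow_add_le _ _).1
  rw [e1, e2]
  refine ⟨sum_le_sum le, ?_⟩
  rw [sum_eq_sum_iff_of_le le]
  have tr : ∀ T : Finset V, 2 ^ attached P f T + 2 ^ attached P f (Pᶜ \ T) = 1 + 2 ^ #P ↔
      (∀ x ∈ P, f x ∉ T) ∨ (∀ x ∈ P, f x ∈ T) := by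
    intro T
    rw [← attached_add hn T, (two_pow_add_le _ _).2]
    simp only [attached, card_eq_zero, filter_eq_empty_iff, mem_sdiff, mem_compl]
    refine or_congr Iff.rfl (forall₂_congr fun x hx => ?_)
    simp [hn x hx]
  simp only [tr]
  constructor
  · intro h
    rcases P.eq_empty_or_nonempty with rfl | ⟨x, hx⟩
    · obtain ⟨c, hc⟩ := hne
      exact ⟨c, by simp, by simp⟩
    · refine ⟨f x, hn x hx, fun y hy => ?_⟩
      rcases h {f x} (by simp [hn x hx]) with h | h
      · exact absurd (mem_singleton_self _) (h x hx)
      · simpa using h y hy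
  · rintro ⟨c, hc, h⟩ T hT
    by_cases hcT : c ∈ T
    · exact Or.inr fun x hx => (h x hx).symm ▸ hcT
    · exact Or.inl fun x hx => (h x hx).symm ▸ hcT

/-! ### The clique with pendant vertices at one vertex -/

/-- When the non-pendant vertices form a clique, `P` and `f` determine the graph. -/
lemma PendantData.adj_iff {G : SimpleGraph V} {P : Finset V} {f : V → V} (D : PendantData G P f)
    (hK : ∀ x ∉ P, ∀ y ∉ P, x ≠ y → G.Adj x y) (x y : V) :
    G.Adj x y ↔ (x ∈ P ∧ y = f x) ∨ (y ∈ P ∧ x = f y) ∨ (x ∉ P ∧ y ∉ P ∧ x ≠ y) := by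
  constructor
  · intro h
    by_cases hx : x ∈ P
    · exact Or.inl ⟨hx, D.uniq x hx y h⟩
    by_cases hy : y ∈ P
    · exact Or.inr (Or.inl ⟨hy, D.uniq y hy x h.symm⟩)
    · exact Or.inr (Or.inr ⟨hx, hy, h.ne⟩)
  · rintro (⟨_, rfl⟩ | ⟨_, rfl⟩ | ⟨h1, h2, h3⟩)
    · exact D.adj x
    · exact (D.adj y).symm
    · exact hK x h1 y h2 h3

lemma iso_cliqueStar_iff {G : SimpleGraph V} {P : Finset V} {f : V → V} (D : PendantData G P f)
    {n p : ℕ} (hpn : p < n) (hcard : Fintype.card V = n) (hP : #P = p) :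
    Nonempty (G ≃g cliqueStar n p) ↔
      (∀ x ∉ P, ∀ y ∉ P, x ≠ y → G.Adj x y) ∧ ∃ c ∉ P, ∀ x ∈ P, f x = c := by
  set Q : Finset (Fin n) := univ.filter (fun i => n - p ≤ i.val) with hQdef
  have hQ : #Q = p := by
    have h1 := card_filter_add_card_filter_not (s := (univ : Finset (Fin n)))
      (fun i => i.val < n - p)
    have h2 : #(univ.filter (fun i : Fin n => i.val < n - p)) = n - p := by
      rw [Fin.card_filter_val_lt]; omega
    have h3 : univ.filter (fun i : Fin n => ¬ i.val < n - p) = Q := by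
      ext i; simp [hQdef]
    rw [h2, h3, card_univ, Fintype.card_fin] at h1
    omega
  constructor
  · rintro ⟨e⟩
    have hadj : ∀ x y, G.Adj x y ↔ x ≠ y ∧ (((e x).val < n - p ∧ (e y).val < n - p) ∨
        ((e x).val = 0 ∧ n - p ≤ (e y).val) ∨ ((e y).val = 0 ∧ n - p ≤ (e x).val)) := by
      intro x y
      have key : (cliqueStar n p).Adj (e x) (e y) ↔ G.Adj x y := e.map_adj_iff
      have he : e x = e y ↔ x = y := EmbeddingLike.apply_eq_iff_eq e
      -- unfolding for variables `i`, `j` leaves the type of `e` alone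
      have unf : ∀ i j : Fin n, (cliqueStar n p).Adj i j ↔ i ≠ j ∧
          (((i.val < n - p ∧ j.val < n - p) ∨ (i.val = 0 ∧ n - p ≤ j.val)) ∨
            ((j.val < n - p ∧ i.val < n - p) ∨ (j.val = 0 ∧ n - p ≤ i.val))) := fun i j => by
        simp only [cliqueStar, SimpleGraph.fromRel_adj]
      rw [← key, unf, ne_eq, he]
      tauto
    set c : V := e.symm ⟨0, by omega⟩ with hc
    have hc0 : ∀ y, (e y).val = 0 ↔ y = c := by
      intro y
      rw [hc, ← EmbeddingLike.apply_eq_iff_eq e, RelIso.apply_symm_apply, Fin.ext_iff]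
    -- the vertices numbered from `n - p` on are pendant, and there are `p` of them
    have hf : ∀ x, n - p ≤ (e x).val → ∀ y, G.Adj x y → y = c := by
      intro x hx y hxy
      rw [← hc0]
      have := (hadj x y).1 hxy
      omega
    have hsub : Q.map e.symm.toEquiv.toEmbedding ⊆ P := by
      intro x hx
      obtain ⟨i, hi, rfl⟩ := mem_map.1 hx
      have hi : n - p ≤ i.val := by simpa [hQdef] using hi
      have hi' : n - p ≤ (e (e.symm i)).val := by simpa using hi
      refine D.mem _ fun y hy => ?_
      exact (hf _ hi' y hy).trans (hf _ hi' _ (D.adj _)).symm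
    have heq := eq_of_subset_of_card_le hsub (by rw [card_map, hQ, hP])
    have hmem : ∀ x, x ∈ P ↔ n - p ≤ (e x).val := by
      intro x
      rw [← heq]
      simp only [mem_map, hQdef, mem_filter, mem_univ, true_and]
      constructor
      · rintro ⟨i, hi, rfl⟩
        show n - p ≤ (e (e.symm i)).val
        simpa using hi
      · intro h
        exact ⟨e x, h, e.symm_apply_apply x⟩
    refine ⟨?_, c, ?_, ?_⟩
    · intro x hx y hy hxy
      rw [hmem] at hx hy
      exact (hadj x y).2 ⟨hxy, Or.inl (by omega)⟩
    · rw [hmem]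
      have := (hc0 c).2 rfl
      omega
    · intro x hx
      exact hf x ((hmem x).1 hx) _ (D.adj x)
  · rintro ⟨hK, c, hcP, hc⟩
    let e₀ : V ≃ Fin n := Fintype.equivFinOfCardEq hcard
    obtain ⟨σ, hσ⟩ := Equiv.Perm.exists_map_finset_eq (P.map e₀.toEmbedding) Q
      (by rw [card_map, hP, hQ])
    have hmem₁ : ∀ x, x ∈ P ↔ n - p ≤ (σ (e₀ x)).val := by
      intro x
      have : σ (e₀ x) ∈ Q ↔ x ∈ P := by
        rw [← hσ]; simp
      rw [← this]; simp [hQdef]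
    -- compose with a transposition so that `c` gets the number `0`
    let z : Fin n := ⟨0, by omega⟩
    let e : V ≃ Fin n := (e₀.trans σ).trans (Equiv.swap (σ (e₀ c)) z)
    have hec : e c = z := by simp [e]
    have hc0 : ∀ x, (e x).val = 0 ↔ x = c := by
      intro x
      rw [← e.apply_eq_iff_eq, hec, Fin.ext_iff]
    have hmem : ∀ x, x ∈ P ↔ n - p ≤ (e x).val := by
      intro x
      have hcc := (hmem₁ c).not.1 hcP
      rw [hmem₁]
      simp only [e, Equiv.trans_apply, Equiv.swap_apply_def]
      split_ifs with h1 h2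
      · rw [h1]; simp only [z]; omega
      · rw [h2]; simp only [z]; omega
      · rfl
    refine ⟨⟨e, ?_⟩⟩
    intro x y
    rw [D.adj_iff hK]
    simp only [cliqueStar, SimpleGraph.fromRel_adj, ne_eq, EmbeddingLike.apply_eq_iff_eq,
      hc0, ← hmem, ← not_le]
    grind

/-! ### Double stars -/

lemma adj_of_compl_pair {G : SimpleGraph V} {P : Finset V} {f : V → V} (D : PendantData G P f)
    (h : G.Connected) {u v : V} (huv : u ≠ v) (hC : ∀ x, x ∉ P ↔ x = u ∨ x = v) :
    G.Adj u v := by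
  by_contra hadj
  -- otherwise `u` and the pendant vertices attached to it form a whole component
  have := mem_of_closed h (A := fun x => x = u ∨ (x ∈ P ∧ f x = u)) (by
    rintro x y (rfl | ⟨h1, h2⟩) hxy
    · by_cases hy : y ∈ P
      · exact Or.inr ⟨hy, (D.uniq y hy x hxy.symm).symm⟩
      · rcases (hC y).1 hy with rfl | rfl
        · exact Or.inl rfl
        · exact absurd hxy hadj
    · exact Or.inl ((D.uniq x h1 y hxy).trans h2)) (Or.inl rfl) v
  rcases this with h | ⟨h, -⟩
  · exact huv h.symm
  · exact (hC v).2 (Or.inr rfl) h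

lemma attached_pos {G : SimpleGraph V} {P : Finset V} {f : V → V} (D : PendantData G P f)
    {u v : V} (hC : ∀ x, x ∉ P ↔ x = u ∨ x = v) : 0 < attached P f {u} := by
  have hu : u ∉ P := (hC u).2 (Or.inl rfl)
  obtain ⟨z, hz, hzv⟩ : ∃ z, G.Adj u z ∧ z ≠ v := by
    by_contra! hcon
    exact hu (D.mem u fun y hy => (hcon y hy).trans (hcon _ (D.adj u)).symm)
  have hzP : z ∈ P := by
    by_contra hzP
    rcases (hC z).1 hzP with rfl | rfl
    · exact hz.ne rfl
    · exact hzv rfl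
  exact card_pos.2 ⟨z, mem_filter.2 ⟨hzP, by simpa using (D.uniq z hzP u hz.symm).symm⟩⟩

/-- A double star with a single leaf at one of its centres is a subdivided star. -/
lemma iso_subdivStar_of {G : SimpleGraph V} {P : Finset V} {f : V → V} (D : PendantData G P f)
    {n : ℕ} (hn : 5 ≤ n) (hcard : Fintype.card V = n) {u v : V} (huv : u ≠ v)
    (hadj : G.Adj u v) (hC : ∀ x, x ∉ P ↔ x = u ∨ x = v) (hu : attached P f {u} = 1) :
    Nonempty (G ≃g subdivStar n) := by
  obtain ⟨l, hl⟩ := card_eq_one.1 hu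
  have hl : ∀ x, x = l ↔ x ∈ P ∧ f x = u := by
    intro x
    rw [← mem_singleton, ← hl]; simp
  have hlP : l ∈ P := ((hl l).1 rfl).1
  have hfv : ∀ x ∈ P, f x = u ∨ f x = v := fun x hx => (hC _).1 (D.not_mem x hx)
  have hlu : l ≠ u := fun h => (hC u).2 (Or.inl rfl) (h ▸ hlP)
  have hlv : l ≠ v := fun h => (hC v).2 (Or.inr rfl) (h ▸ hlP)
  have hK : ∀ x ∉ P, ∀ y ∉ P, x ≠ y → G.Adj x y := by
    intro x hx y hy hxy
    rcases (hC x).1 hx with rfl | rfl <;> rcases (hC y).1 hy with rfl | rfl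
    · exact absurd rfl hxy
    · exact hadj
    · exact hadj.symm
    · exact absurd rfl hxy
  let e₀ : V ≃ Fin n := Fintype.equivFinOfCardEq hcard
  obtain ⟨σ, hσ⟩ := Equiv.Perm.exists_extending_pair
    (![e₀ v, e₀ u, e₀ l] : Fin 3 → Fin n)
    (![⟨0, by omega⟩, ⟨1, by omega⟩, ⟨n - 1, by omega⟩] : Fin 3 → Fin n)
    (by
      intro i j hij
      fin_cases i <;> fin_cases j <;>
        simp [huv, huv.symm, hlu, hlu.symm, hlv, hlv.symm] at hij ⊢)
    (by
      intro i j hij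
      fin_cases i <;> fin_cases j <;> simp [Fin.ext_iff] at hij ⊢ <;> omega)
  let e : V ≃ Fin n := e₀.trans σ
  have ev : (e v).val = 0 := congrArg Fin.val (hσ 0)
  have eu : (e u).val = 1 := congrArg Fin.val (hσ 1)
  have el : (e l).val = n - 1 := congrArg Fin.val (hσ 2)
  have hv : ∀ x, (e x).val = 0 ↔ x = v := fun x => by
    rw [← e.apply_eq_iff_eq, Fin.ext_iff, ev]
  have hu : ∀ x, (e x).val = 1 ↔ x = u := fun x => by
    rw [← e.apply_eq_iff_eq, Fin.ext_iff, eu]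
  have hl' : ∀ x, (e x).val = n - 1 ↔ x = l := fun x => by
    rw [← el, ← Fin.ext_iff, e.apply_eq_iff_eq]
  have hmid : ∀ x, (1 ≤ (e x).val ∧ (e x).val ≤ n - 2) ↔ x ≠ v ∧ x ≠ l := by
    intro x
    rw [ne_eq, ne_eq, ← hv, ← hl']
    have := (e x).2
    omega
  refine ⟨⟨e, ?_⟩⟩
  intro x y
  rw [D.adj_iff hK]
  simp only [subdivStar, SimpleGraph.fromRel_adj, ne_eq, EmbeddingLike.apply_eq_iff_eq,
    hv, hu, hl', hmid]
  grind

/-- In a subdivided star, the vertex `d` numbered `1` has a single pendant neighbour. -/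
lemma attached_of_iso_subdivStar {G : SimpleGraph V} {P : Finset V} {f : V → V}
    (D : PendantData G P f) {n : ℕ} (hn : 5 ≤ n) (hP : #(Pᶜ) = 2)
    (e : G ≃g subdivStar n) : ∃ d ∉ P, attached P f {d} = 1 := by
  set c : V := e.symm ⟨0, by omega⟩ with hc
  set d : V := e.symm ⟨1, by omega⟩ with hd
  set l : V := e.symm ⟨n - 1, by omega⟩ with hl
  have hc0 : ∀ y, (e y).val = 0 ↔ y = c := fun y => by
    rw [hc, ← EmbeddingLike.apply_eq_iff_eq e, RelIso.apply_symm_apply, Fin.ext_iff]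
  have hd1 : ∀ y, (e y).val = 1 ↔ y = d := fun y => by
    rw [hd, ← EmbeddingLike.apply_eq_iff_eq e, RelIso.apply_symm_apply, Fin.ext_iff]
  have hl1 : ∀ y, (e y).val = n - 1 ↔ y = l := fun y => by
    rw [hl, ← EmbeddingLike.apply_eq_iff_eq e, RelIso.apply_symm_apply, Fin.ext_iff]
  have hmid : ∀ x, (1 ≤ (e x).val ∧ (e x).val ≤ n - 2) ↔ x ≠ c ∧ x ≠ l := by
    intro x
    rw [ne_eq, ne_eq, ← hc0, ← hl1]
    have := (e x).2
    omega
  have hadj : ∀ x y, G.Adj x y ↔ x ≠ y ∧ (((x = c ∧ y ≠ c ∧ y ≠ l) ∨ (x = d ∧ y = l)) ∨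
      ((y = c ∧ x ≠ c ∧ x ≠ l) ∨ (y = d ∧ x = l))) := by
    intro x y
    have key : (subdivStar n).Adj (e x) (e y) ↔ G.Adj x y := e.map_adj_iff
    have he : e x = e y ↔ x = y := EmbeddingLike.apply_eq_iff_eq e
    -- unfolding for variables `i`, `j` leaves the type of `e` alone
    have unf : ∀ i j : Fin n, (subdivStar n).Adj i j ↔ i ≠ j ∧
        (((i.val = 0 ∧ 1 ≤ j.val ∧ j.val ≤ n - 2) ∨ (i.val = 1 ∧ j.val = n - 1)) ∨
          ((j.val = 0 ∧ 1 ≤ i.val ∧ i.val ≤ n - 2) ∨ (j.val = 1 ∧ i.val = n - 1))) := fun i j => by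
      simp only [subdivStar, SimpleGraph.fromRel_adj]
    rw [← key, unf, ne_eq, he]
    simp only [hc0, hd1, hl1, hmid]
  have hcd : c ≠ d := by simp [hc, hd]
  have hcl : c ≠ l := by
    simp only [hc, hl, ne_eq, EmbeddingLike.apply_eq_iff_eq, Fin.mk.injEq]; omega
  have hdl : d ≠ l := by
    simp only [hd, hl, ne_eq, EmbeddingLike.apply_eq_iff_eq, Fin.mk.injEq]; omega
  -- a vertex other than `c` and `d` has a single neighbour
  have hpend : ∀ x, x ≠ c → x ≠ d → x ∈ P := by
    intro x hxc hxd
    refine D.mem x fun y hy => ?_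
    have h1 := (hadj x y).1 hy
    have h2 := (hadj x (f x)).1 (D.adj x)
    grind
  have hsub : Pᶜ ⊆ {c, d} := by
    intro x hx
    have hx : x ∉ P := by simpa using hx
    by_contra h
    simp only [mem_insert, mem_singleton, not_or] at h
    exact hx (hpend x h.1 h.2)
  have heq := eq_of_subset_of_card_le hsub (by rw [hP]; exact card_le_two)
  have hcP : c ∉ P := by rw [← mem_compl, heq]; simp
  have hdP : d ∉ P := by rw [← mem_compl, heq]; simp
  refine ⟨d, hdP, card_eq_one.2 ⟨l, ?_⟩⟩
  ext x
  simp only [mem_filter, mem_singleton]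
  constructor
  · rintro ⟨hx, hfx⟩
    have := (hadj x d).1 (hfx ▸ D.adj x)
    grind
  · rintro rfl
    have hlP := hpend l hcl.symm hdl.symm
    refine ⟨hlP, (D.uniq l hlP d ?_).symm⟩
    rw [hadj]
    exact ⟨hdl.symm, Or.inr (Or.inr ⟨rfl, rfl⟩)⟩

end

/-! ### The two extremal problems -/

theorem stmt_10 {V : Type*} [Fintype V] (n p : ℕ) (hn : 5 ≤ n) (hp : p ≤ n - 2)
    (G : SimpleGraph V) (hconn : G.Connected) (hcard : Fintype.card V = n)
    (hpend : numPendant G = p) :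
    (p < n - 2 →
      numCIS G ≤ 2 ^ (n - 1) + 2 ^ (n - p - 1) + p - 1 ∧
      (numCIS G = 2 ^ (n - 1) + 2 ^ (n - p - 1) + p - 1 ↔
        Nonempty (G ≃g cliqueStar n p))) ∧
    (p = n - 2 →
      numCIS G ≤ n + 3 * 2 ^ (n - 3) ∧
      (numCIS G = n + 3 * 2 ^ (n - 3) ↔ Nonempty (G ≃g subdivStar n))) := by
  classical
  obtain ⟨P, f, D, hP⟩ := exists_pendantData hconn (by omega)
  rw [hpend] at hP
  have hPc : Finset.card Pᶜ = n - p := by rw [Finset.card_compl, hcard, hP]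
  have hcand := card_candidates D
  have hle := numCIS_le D
  have heq := numCIS_eq_iff D
  constructor
  · intro hp'
    rw [iso_cliqueStar_iff D (by omega) hcard hP, ← heq]
    obtain ⟨s1, s2⟩ := sum_attached (f := f) D.not_mem
      (Finset.card_pos.1 (by rw [hPc]; omega))
    rw [← s2]
    generalize ∑ T ∈ (Pᶜ).powerset, 2 ^ attached P f T = s at *
    have e : 2 ^ Finset.card Pᶜ * (1 + 2 ^ Finset.card P)
        = 2 * (2 ^ (n - 1) + 2 ^ (n - p - 1)) := by
      rw [hPc, hP, mul_add, ← pow_add, mul_add, ← pow_succ', ← pow_succ',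
        show n - p + p = n - 1 + 1 by omega, show n - p - 1 + 1 = n - p by omega]
      ring
    have : 0 < 2 ^ (n - 1) := by positivity
    rw [e] at s1 ⊢
    omega
  · intro hp'
    obtain ⟨u, v, huv, hC⟩ := Finset.card_eq_two.1 (show Finset.card Pᶜ = 2 by omega)
    have hC' : ∀ x, x ∉ P ↔ x = u ∨ x = v := fun x => by
      rw [← Finset.mem_compl, hC]; simp
    have hC'' : ∀ x, x ∉ P ↔ x = v ∨ x = u := fun x => by rw [hC', or_comm]
    have hadj := adj_of_compl_pair D hconn huv hC'
    have hN := heq.2 (by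
      intro x hx y hy hxy
      rcases (hC' x).1 hx with rfl | rfl <;> rcases (hC' y).1 hy with rfl | rfl
      · exact absurd rfl hxy
      · exact hadj
      · exact hadj.symm
      · exact absurd rfl hxy)
    have ha := attached_pos D hC'
    have hb := attached_pos D hC''
    have hab : attached P f {u} + attached P f {v} = p := by
      rw [← hP, ← attached_add D.not_mem {u}, hC]
      congr 2
      ext x
      simp only [Finset.mem_sdiff, Finset.mem_insert, Finset.mem_singleton]
      grind
    have h0 : attached P f ∅ = 0 := by simp [attached]
    have h1 : attached P f {u, v} = p := by
      rw [← hP]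
      have := attached_add (f := f) D.not_mem ∅
      rwa [h0, Finset.sdiff_empty, hC, zero_add] at this
    have hs : ∑ T ∈ (Pᶜ).powerset, 2 ^ attached P f T
        = 1 + 2 ^ attached P f {u} + 2 ^ attached P f {v} + 2 ^ p := by
      rw [hC, Finset.sum_powerset_insert (by simpa using huv),
        ← insert_empty_eq, Finset.sum_powerset_insert (by simp),
        Finset.sum_powerset_insert (by simp)]
      simp only [Finset.powerset_empty, Finset.sum_singleton, insert_empty_eq, h0, h1]
      ring
    have hiso : Nonempty (G ≃g subdivStar n) ↔
        attached P f {u} = 1 ∨ attached P f {v} = 1 := by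
      constructor
      · rintro ⟨e⟩
        obtain ⟨d, hd, h⟩ := attached_of_iso_subdivStar D hn (by omega) e
        rcases (hC' d).1 hd with rfl | rfl
        · exact Or.inl h
        · exact Or.inr h
      · rintro (h | h)
        · exact iso_subdivStar_of D hn hcard huv hadj hC' h
        · exact iso_subdivStar_of D hn hcard huv.symm hadj.symm hC'' h
    rw [hs] at hcand
    rw [hiso]
    obtain ⟨a, ha'⟩ : ∃ a, attached P f {u} = a + 1 := ⟨_, (Nat.succ_pred_eq_of_pos ha).symm⟩
    obtain ⟨b, hb'⟩ : ∃ b, attached P f {v} = b + 1 := ⟨_, (Nat.succ_pred_eq_of_pos hb).symm⟩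
    rw [ha', hb'] at hcand hab ⊢
    -- both attached stars are nonempty, so the exponents can be lowered by one
    obtain ⟨t1, t2⟩ := two_pow_add_le a b
    have e1 : n - 3 = a + b + 1 := by omega
    have e2 : p = a + b + 2 := by omega
    rw [e1]
    rw [e2] at hcand
    simp only [pow_succ] at hcand ⊢
    omega
end

section
/- Let n ≥ 4 and let G be a connected graph with n vertices exactly one of which is pendant. Then N(G) ≥ (n² + 3n − 4)/2, and equality holds if and only if G is obtained by identifying a vertex of the triangle K_3 with a leaf of the path P_{n−2}. -/
/-- The graph of order `n` obtained by identifying a vertex of the triangle `K_3` with a leaf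
of the path `P_{n-2}`: the path is `0 - 1 - ⋯ - (n-3)` and the triangle is on the vertices
`n-3, n-2, n-1`. -/
def tadpole (n : ℕ) : SimpleGraph (Fin n) :=
  SimpleGraph.fromRel (fun a b =>
    (b.val = a.val + 1 ∧ b.val ≤ n - 3) ∨ (n - 3 ≤ a.val ∧ n - 3 ≤ b.val))

section Proof

open Finset
open scoped Classical

variable {V : Type*} {G : SimpleGraph V}

/-- `S` induces a connected subgraph of `G` (in particular `S` is nonempty). -/
def Conn (G : SimpleGraph V) (S : Finset V) : Prop := (G.induce (S : Set V)).Connected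

/-- The connected subsets of `X`, i.e. the connected induced subgraphs of `G[X]`. -/
noncomputable def connIn (G : SimpleGraph V) (X : Finset V) : Finset (Finset V) :=
  X.powerset.filter (Conn G)

/-- The connected subsets of `X` containing the vertex `v`. -/
noncomputable def connAt (G : SimpleGraph V) (X : Finset V) (v : V) : Finset (Finset V) :=
  X.powerset.filter fun S => Conn G S ∧ v ∈ S

/-- For a vertex `z`, having degree at least two in `G[X]`: whatever vertex `b` is excluded,
a neighbour remains. -/
def Rich (G : SimpleGraph V) (X : Finset V) (z : V) : Prop :=
  ∀ b, ∃ c ∈ X, c ≠ b ∧ G.Adj z c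

lemma mem_connIn {X S : Finset V} : S ∈ connIn G X ↔ S ⊆ X ∧ Conn G S := by
  simp [connIn]

lemma mem_connAt {X S : Finset V} {v : V} : S ∈ connAt G X v ↔ S ⊆ X ∧ Conn G S ∧ v ∈ S := by
  simp [connAt]

/-! ### Connected vertex sets -/

lemma Conn.nonempty {S : Finset V} (h : Conn G S) : S.Nonempty := by
  obtain ⟨x⟩ := SimpleGraph.Connected.nonempty h
  exact ⟨x.1, x.2⟩

lemma conn_singleton (v : V) : Conn G {v} := by
  unfold Conn
  rw [Finset.coe_singleton]
  exact ⟨fun a b => by rw [Subsingleton.elim a b]⟩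

lemma Conn.union_adj {S T : Finset V} (hS : Conn G S) (hT : Conn G T) {a b : V} (ha : a ∈ S)
    (hb : b ∈ T) (hab : G.Adj a b) : Conn G (S ∪ T) := by
  unfold Conn at *
  rw [Finset.coe_union]
  exact SimpleGraph.connected_induce_union hS.preconnected hT.preconnected (by simpa using ha)
    (by simpa using hb) hab

lemma Conn.insert {S : Finset V} (hS : Conn G S) {a b : V} (ha : a ∈ S) (hab : G.Adj a b) :
    Conn G (insert b S) := by
  rw [Finset.insert_eq, Finset.union_comm]
  exact hS.union_adj (conn_singleton b) ha (by simp) hab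

lemma Conn.cut {S : Finset V} (hS : Conn G S) (p : V → Prop) {x y : V} (hx : x ∈ S) (hy : y ∈ S)
    (hpx : p x) (hpy : ¬ p y) : ∃ c ∈ S, ∃ d ∈ S, p c ∧ ¬ p d ∧ G.Adj c d := by
  obtain ⟨w⟩ := hS.preconnected ⟨x, hx⟩ ⟨y, hy⟩
  obtain ⟨d, -, h1, h2⟩ := w.exists_boundary_dart {z | p z.1} hpx hpy
  exact ⟨d.fst.1, d.fst.2, d.snd.1, d.snd.2, h1, h2, d.adj⟩

/-- A connected subset of a connected set grows, one vertex at a time, to any larger size. -/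
lemma grow {A X : Finset V} (hA : Conn G A) (hX : Conn G X) (hAX : A ⊆ X) (k : ℕ)
    (hk : A.card ≤ k) : k ≤ X.card → ∃ S, A ⊆ S ∧ S ⊆ X ∧ Conn G S ∧ S.card = k := by
  induction k, hk using Nat.le_induction with
  | base => exact fun _ => ⟨A, subset_rfl, hAX, hA, rfl⟩
  | succ k hk ih =>
    intro hkX
    obtain ⟨S, hAS, hSX, hS, hc⟩ := ih (by omega)
    obtain ⟨y, hy, hyS⟩ := Finset.exists_mem_notMem_of_card_lt_card (s := S) (t := X) (by omega)
    obtain ⟨x, hx⟩ := hS.nonempty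
    obtain ⟨c, -, d, hd, h1, h2, h3⟩ := hX.cut (· ∈ S) (hSX hx) hy hx hyS
    refine ⟨_, hAS.trans (Finset.subset_insert d S), Finset.insert_subset hd hSX,
      hS.insert h1 h3, ?_⟩
    rw [Finset.card_insert_of_notMem h2, hc]

/-- A connected set with at least two vertices has a non-cut vertex other than `v`. -/
lemma exists_noncut {X : Finset V} (hX : Conn G X) {v : V} (hv : v ∈ X) (h2 : 2 ≤ X.card) :
    ∃ y ∈ X, y ≠ v ∧ Conn G (X.erase y) := by
  obtain ⟨S, hvS, hSX, hS, hc⟩ := grow (conn_singleton v) hX (by simpa using hv) (X.card - 1)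
    (by simp; omega) (by omega)
  obtain ⟨y, hy, hyS⟩ := Finset.exists_mem_notMem_of_card_lt_card (s := S) (t := X) (by omega)
  have : S = X.erase y := by
    apply Finset.eq_of_subset_of_card_le
    · intro z hz
      exact Finset.mem_erase.2 ⟨fun h => hyS (h ▸ hz), hSX hz⟩
    · rw [Finset.card_erase_of_mem hy, hc]
  refine ⟨y, hy, ?_, this ▸ hS⟩
  rintro rfl
  exact hyS (hvS (by simp))

/-- Two disjoint connected subsets of a connected set `H` extend to a partition of `H` into two
connected parts. -/
lemma exists_partition {H : Finset V} (hH : Conn G H) (k : ℕ) : ∀ A B : Finset V,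
    Conn G A → Conn G B → A ⊆ H → B ⊆ H → Disjoint A B → (H \ (A ∪ B)).card = k →
    ∃ A' B', A ⊆ A' ∧ B ⊆ B' ∧ Conn G A' ∧ Conn G B' ∧ Disjoint A' B' ∧ A' ∪ B' = H := by
  induction k with
  | zero =>
    intro A B hA hB hAH hBH hd hc
    refine ⟨A, B, subset_rfl, subset_rfl, hA, hB, hd, ?_⟩
    exact (Finset.union_subset hAH hBH).antisymm
      (Finset.sdiff_eq_empty_iff_subset.1 (Finset.card_eq_zero.1 hc))
  | succ k ih =>
    intro A B hA hB hAH hBH hd hc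
    obtain ⟨y, hy⟩ := Finset.card_pos.1 (by omega : 0 < (H \ (A ∪ B)).card)
    rw [Finset.mem_sdiff] at hy
    obtain ⟨x, hx⟩ := hA.nonempty
    obtain ⟨c, -, d, hdH, h1, h2, h3⟩ := hH.cut (· ∈ A ∪ B) (hAH hx) hy.1
      (Finset.mem_union_left _ hx) hy.2
    have hcard : ((H \ (A ∪ B)).erase d).card = k := by
      rw [Finset.card_erase_of_mem (Finset.mem_sdiff.2 ⟨hdH, h2⟩), hc]; rfl
    rw [Finset.mem_union, not_or] at h2
    rcases Finset.mem_union.1 h1 with h1 | h1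
    · obtain ⟨A', B', h4, h5, h6⟩ := ih (Insert.insert d A) B (hA.insert h1 h3) hB
        (Finset.insert_subset hdH hAH) hBH (Finset.disjoint_insert_left.2 ⟨h2.2, hd⟩)
        (by rw [← hcard]; congr 1; ext z; simp; tauto)
      exact ⟨A', B', (Finset.subset_insert _ _).trans h4, h5, h6⟩
    · obtain ⟨A', B', h4, h5, h6⟩ := ih A (Insert.insert d B) hA (hB.insert h1 h3)
        hAH (Finset.insert_subset hdH hBH) (Finset.disjoint_insert_right.2 ⟨h2.1, hd⟩)
        (by rw [← hcard]; congr 1; ext z; simp; tauto)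
      exact ⟨A', B', h4, (Finset.subset_insert _ _).trans h5, h6⟩

/-! ### Connected sets through a fixed vertex -/

/-- There is a connected set through `v` of every size from `1` to `|X|`. -/
lemma card_le_connAt {X : Finset V} (hX : Conn G X) {v : V} (hv : v ∈ X) :
    X.card ≤ (connAt G X v).card := by
  calc X.card = (Finset.Icc 1 X.card).card := by simp
    _ ≤ ((connAt G X v).image Finset.card).card := by
      apply Finset.card_le_card
      intro k hk
      rw [Finset.mem_Icc] at hk
      obtain ⟨S, hvS, hSX, hS, hc⟩ := grow (conn_singleton v) hX (by simpa using hv) k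
        (by simpa using hk.1) hk.2
      exact Finset.mem_image.2 ⟨S, mem_connAt.2 ⟨hSX, hS, hvS (by simp)⟩, hc⟩
    _ ≤ _ := Finset.card_image_le

lemma card_connIn_eq (G : SimpleGraph V) (X : Finset V) (v : V) :
    (connIn G X).card = (connAt G X v).card + (connIn G (X.erase v)).card := by
  rw [← Finset.card_filter_add_card_filter_not (s := connIn G X) (fun S => v ∈ S)]
  congr 2
  · ext S; simp [mem_connIn, mem_connAt, and_assoc]
  · ext S; simp [mem_connIn, Finset.subset_erase]; tauto

/-- Let `y ≠ v` be a non-cut vertex. At least `|X| - 1` connected sets through `v` avoid `y`. Two more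
contain `y`: the set `X`, and `X` minus a non-cut vertex `z ≠ v` of `X \ {y}`, which is connected
because `y`, not being pendant, has a neighbour other than `z`. -/
lemma card_lt_connAt {X : Finset V} (hX : Conn G X) {v : V} (hv : v ∈ X) (h2 : 2 ≤ X.card)
    (hr : ∀ z ∈ X, z ≠ v → Rich G X z) : X.card + 1 ≤ (connAt G X v).card := by
  obtain ⟨y, hy, hyv, hH⟩ := exists_noncut hX hv h2
  have hvH : v ∈ X.erase y := Finset.mem_erase.2 ⟨hyv.symm, hv⟩
  have hHc : (X.erase y).card = X.card - 1 := Finset.card_erase_of_mem hy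
  have h2H : 2 ≤ (X.erase y).card := by
    obtain ⟨c, hc, hcv, hac⟩ := hr y hy hyv v
    apply Finset.one_lt_card.2
    exact ⟨v, hvH, c, Finset.mem_erase.2 ⟨hac.ne.symm, hc⟩, hcv.symm⟩
  obtain ⟨z, hz, hzv, hZ⟩ := exists_noncut hH hvH h2H
  obtain ⟨hzy, hzX⟩ := Finset.mem_erase.1 hz
  obtain ⟨b, hb, hbz, hyb⟩ := hr y hy hyv z
  have hXz : Conn G (X.erase z) := by
    have := hZ.insert (a := b) (b := y)
      (Finset.mem_erase.2 ⟨hbz, Finset.mem_erase.2 ⟨hyb.ne.symm, hb⟩⟩) hyb.symm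
    convert this using 1
    ext t; simp only [Finset.mem_erase, Finset.mem_insert]; grind
  have hsub : insert X (insert (X.erase z) (connAt G (X.erase y) v)) ⊆ connAt G X v := by
    intro S hS
    rw [Finset.mem_insert, Finset.mem_insert, mem_connAt] at hS
    rw [mem_connAt]
    rcases hS with rfl | rfl | ⟨h1, h3⟩
    · exact ⟨subset_rfl, hX, hv⟩
    · exact ⟨Finset.erase_subset _ _, hXz, Finset.mem_erase.2 ⟨hzv.symm, hv⟩⟩
    · exact ⟨h1.trans (Finset.erase_subset _ _), h3⟩
  have h1 : X.erase z ∉ connAt G (X.erase y) v := by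
    intro h
    have := (mem_connAt.1 h).1 (Finset.mem_erase.2 ⟨hzy.symm, hy⟩)
    simp at this
  have h3 : X ∉ insert (X.erase z) (connAt G (X.erase y) v) := by
    rw [Finset.mem_insert, not_or]
    refine ⟨fun h => ?_, fun h => ?_⟩
    · rw [h] at hzX; simp at hzX
    · have := (mem_connAt.1 h).1 hy
      simp at this
  have := Finset.card_le_card hsub
  rw [Finset.card_insert_of_notMem h3, Finset.card_insert_of_notMem h1] at this
  have := card_le_connAt hH hvH
  omega

/-- If `v` is adjacent to `a ∈ A` and `b ∈ B` with `A`, `B` disjoint, then the sets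
`{v} ∪ S ∪ T`, with `S ⊆ A` empty or connected through `a` and `T ⊆ B` empty or connected
through `b`, are distinct connected sets through `v`. -/
lemma exists_family {X A B : Finset V} {v a b : V} (hvX : v ∈ X) (hAX : A ⊆ X) (hBX : B ⊆ X)
    (hvA : v ∉ A) (hvB : v ∉ B) (hd : Disjoint A B) (hva : G.Adj v a) (hvb : G.Adj v b) :
    ∃ F ⊆ connAt G X v,
      F.card = ((connAt G A a).card + 1) * ((connAt G B b).card + 1) ∧
      ∀ E ∈ F, ∀ x ∈ E, x ∈ B → b ∈ E := by
  have hnot : ∀ (Y : Finset V) (y : V), ∅ ∉ connAt G Y y := by simp [mem_connAt]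
  have hm : ∀ (Y : Finset V) (y : V), ∀ S ∈ insert ∅ (connAt G Y y),
      S ⊆ Y ∧ (S = ∅ ∨ Conn G S ∧ y ∈ S) := by
    intro Y y S hS
    rcases Finset.mem_insert.1 hS with rfl | h
    · simp
    · exact ⟨(mem_connAt.1 h).1, Or.inr (mem_connAt.1 h).2⟩
  have hadd : ∀ (E S : Finset V) (y : V), Conn G E → v ∈ E → G.Adj v y →
      (S = ∅ ∨ Conn G S ∧ y ∈ S) → Conn G (E ∪ S) := by
    rintro E S y hE hv hy (rfl | h)
    · simpa using hE
    · exact hE.union_adj h.1 hv h.2 hy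
  refine ⟨(insert ∅ (connAt G A a) ×ˢ insert ∅ (connAt G B b)).image
    (fun p => {v} ∪ p.1 ∪ p.2), ?_, ?_, ?_⟩
  · intro E hE
    obtain ⟨⟨S, T⟩, hp, rfl⟩ := Finset.mem_image.1 hE
    obtain ⟨hS, hT⟩ := Finset.mem_product.1 hp
    obtain ⟨hSA, hS⟩ := hm _ _ _ hS
    obtain ⟨hTB, hT⟩ := hm _ _ _ hT
    refine mem_connAt.2 ⟨?_, ?_, by simp⟩
    · exact Finset.union_subset (Finset.union_subset (by simpa using hvX) (hSA.trans hAX))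
        (hTB.trans hBX)
    · exact hadd _ _ b (hadd _ _ a (conn_singleton v) (by simp) hva hS) (by simp) hvb hT
  · rw [Finset.card_image_of_injOn, Finset.card_product, Finset.card_insert_of_notMem (hnot _ _),
      Finset.card_insert_of_notMem (hnot _ _)]
    rintro ⟨S, T⟩ hp ⟨S', T'⟩ hp' h
    obtain ⟨hS, hT⟩ := Finset.mem_product.1 hp
    obtain ⟨hS', hT'⟩ := Finset.mem_product.1 hp'
    have h1 := (hm _ _ _ hS).1
    have h2 := (hm _ _ _ hT).1
    have h3 := (hm _ _ _ hS').1
    have h4 := (hm _ _ _ hT').1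
    simp only at h1 h2 h3 h4 h
    have hd' := Finset.disjoint_left.1 hd
    -- `S` and `T` are recovered as the traces on `A` and `B`.
    have key : ∀ x, (x = v ∨ x ∈ S ∨ x ∈ T) ↔ (x = v ∨ x ∈ S' ∨ x ∈ T') := by
      intro x
      have := congrArg (x ∈ ·) h
      simpa [or_assoc] using this
    refine Prod.ext ?_ ?_
    · ext x
      have := key x
      have := @h1 x; have := @h2 x; have := @h3 x; have := @h4 x; have := @hd' x
      by_cases hx : x = v <;> grind
    · ext x
      have := key x
      have := @h1 x; have := @h2 x; have := @h3 x; have := @h4 x; have := @hd' x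
      by_cases hx : x = v <;> grind
  · intro E hE x hx hxB
    obtain ⟨⟨S, T⟩, hp, rfl⟩ := Finset.mem_image.1 hE
    obtain ⟨hS, hT⟩ := Finset.mem_product.1 hp
    obtain ⟨hSA, hS⟩ := hm _ _ _ hS
    obtain ⟨hTB, hT⟩ := hm _ _ _ hT
    simp only [Finset.mem_union, Finset.mem_singleton] at hx ⊢
    rcases hx with (rfl | hx) | hx
    · exact absurd hxB hvB
    · exact absurd hxB (Finset.disjoint_left.1 hd (hSA hx))
    · rcases hT with rfl | hT
      · simp at hx
      · exact Or.inr hT.2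

lemma exists_rich_partition {X : Finset V} {v : V} (hH : Conn G (X.erase v)) (hr : Rich G X v) :
    ∃ a b A B, a ∈ A ∧ b ∈ B ∧ Conn G A ∧ Conn G B ∧ Disjoint A B ∧ A ∪ B = X.erase v ∧
      G.Adj v a ∧ G.Adj v b := by
  obtain ⟨a, ha, -, hva⟩ := hr v
  obtain ⟨b, hb, hba, hvb⟩ := hr a
  obtain ⟨A, B, h1, h2, h3, h4, h5, h6⟩ := exists_partition hH _ {a} {b} (conn_singleton a)
    (conn_singleton b) (by simpa using ⟨hva.ne.symm, ha⟩) (by simpa using ⟨hvb.ne.symm, hb⟩)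
    (by simpa using hba.symm) rfl
  exact ⟨a, b, A, B, h1 (by simp), h2 (by simp), h3, h4, h5, h6, hva, hvb⟩

/-- With parts of sizes `p + q = n - 1`, the family has at least
`(p + 1) * (q + 1) = p * q + n ≥ 2 * n - 2` members. -/
lemma connAt_rich {X : Finset V} {v : V} (hv : v ∈ X) (hH : Conn G (X.erase v))
    (hr : Rich G X v) : 2 * X.card ≤ (connAt G X v).card + 2 := by
  obtain ⟨a, b, A, B, ha, hb, hA, hB, hd, hU, hva, hvb⟩ := exists_rich_partition hH hr
  have hAX : A ⊆ X.erase v := hU ▸ Finset.subset_union_left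
  have hBX : B ⊆ X.erase v := hU ▸ Finset.subset_union_right
  obtain ⟨F, hF, hFc, -⟩ := exists_family hv (hAX.trans (Finset.erase_subset _ _))
    (hBX.trans (Finset.erase_subset _ _)) (fun h => by simpa using hAX h)
    (fun h => by simpa using hBX h) hd hva hvb
  have h1 := card_le_connAt hA ha
  have h2 := card_le_connAt hB hb
  have h3 := Finset.card_le_card hF
  have h4 : A.card + B.card = X.card - 1 := by
    rw [← Finset.card_union_of_disjoint hd, hU, Finset.card_erase_of_mem hv]
  have h5 : 0 < A.card := Finset.card_pos.2 hA.nonempty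
  have h6 : 0 < B.card := Finset.card_pos.2 hB.nonempty
  have h7 : (A.card + 1) * (B.card + 1) ≤ F.card := by rw [hFc]; gcongr
  obtain ⟨p, hp⟩ := Nat.exists_eq_add_of_lt h5
  obtain ⟨q, hq⟩ := Nat.exists_eq_add_of_lt h6
  have : (A.card + 1) * (B.card + 1) ≥ 2 * (A.card + B.card) := by
    rw [hp, hq]; nlinarith [Nat.zero_le (p * q)]
  omega

/-- The case where one part of the partition is a single vertex `a`. Without pendant vertices,
the part `B` carries an additional connected set through `b`, or there is a connected set
`{v, a, b'}` or `{v, z}` meeting `B` but avoiding `b`. -/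
lemma connAt_single {X B : Finset V} {v a b : V} (hX : ∀ x, x ∈ X ↔ x = v ∨ x = a ∨ x ∈ B)
    (hvB : v ∉ B) (haB : a ∉ B) (hB : Conn G B) (hb : b ∈ B) (hva : G.Adj v a) (hvb : G.Adj v b)
    (h2 : 2 ≤ B.card) (hr : ∀ z ∈ X, Rich G X z) :
    2 * B.card + 3 ≤ (connAt G X v).card := by
  have hvX : v ∈ X := (hX v).2 (Or.inl rfl)
  have haX : a ∈ X := (hX a).2 (Or.inr (Or.inl rfl))
  have hBX : B ⊆ X := fun x hx => (hX x).2 (Or.inr (Or.inr hx))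
  obtain ⟨F, hF, hFc, hFb⟩ := exists_family (A := {a}) hvX (by simpa using haX) hBX
    (by simpa using hva.ne) hvB (by simpa using haB) hva hvb
  have h1 := card_le_connAt (conn_singleton (G := G) a) (Finset.mem_singleton_self a)
  rw [Finset.card_singleton] at h1
  have extra : ∀ E ⊆ X, Conn G E → v ∈ E → ∀ x ∈ E, x ∈ B → b ∉ E →
      2 * B.card + 3 ≤ (connAt G X v).card := by
    intro E hEX hE hvE x hxE hxB hbE
    have hEF : E ∉ F := fun h => hbE (hFb E h x hxE hxB)
    have hle := Finset.card_le_card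
      (Finset.insert_subset (mem_connAt.2 ⟨hEX, hE, hvE⟩) hF : insert E F ⊆ connAt G X v)
    rw [Finset.card_insert_of_notMem hEF, hFc] at hle
    have := card_le_connAt hB hb
    nlinarith
  by_cases hab : ∃ b' ∈ B, b' ≠ b ∧ G.Adj a b'
  · obtain ⟨b', hb', hne, hadj⟩ := hab
    refine extra {b', a, v} ?_ ?_ (by simp) b' (by simp) hb' ?_
    · intro x hx
      simp only [Finset.mem_insert, Finset.mem_singleton] at hx
      rcases hx with rfl | rfl | rfl
      exacts [hBX hb', haX, hvX]
    · exact ((conn_singleton v).insert (Finset.mem_singleton_self v) hva).insert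
        (Finset.mem_insert_self _ _) hadj
    · simp only [Finset.mem_insert, Finset.mem_singleton, not_or]
      exact ⟨hne.symm, fun h => haB (h ▸ hb), hvb.ne.symm⟩
  by_cases hrB : ∀ z ∈ B, z ≠ b → Rich G B z
  · have h3 := card_lt_connAt hB hb h2 hrB
    have h4 := Finset.card_le_card hF
    rw [hFc] at h4
    nlinarith
  · simp only [Rich, not_forall] at hrB
    obtain ⟨z, hz, hzb, d, hd⟩ := hrB
    obtain ⟨c, hc, hcd, hzc⟩ := hr z (hBX hz) d
    rcases (hX c).1 hc with rfl | rfl | hcB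
    · refine extra {z, c} ?_ ?_ (by simp) z (by simp) hz ?_
      · intro x hx
        simp only [Finset.mem_insert, Finset.mem_singleton] at hx
        rcases hx with rfl | rfl
        exacts [hBX hz, hvX]
      · exact (conn_singleton c).insert (Finset.mem_singleton_self c) hzc.symm
      · simp only [Finset.mem_insert, Finset.mem_singleton, not_or]
        exact ⟨hzb.symm, hvb.ne.symm⟩
    · exact absurd ⟨z, hz, hzb, hzc.symm⟩ hab
    · exact absurd ⟨c, hcB, hcd, hzc⟩ hd

/-- Without pendant vertices the bound `2 * n - 2` improves by one: if both parts of the partition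
have at least two vertices then `(p + 1) * (q + 1) ≥ 2 * (p + q) + 1`, and otherwise
`connAt_single` applies. -/
lemma connAt_no_pendant {X : Finset V} {v : V} (hv : v ∈ X) (hH : Conn G (X.erase v))
    (hr : ∀ z ∈ X, Rich G X z) (h4 : 4 ≤ X.card) : 2 * X.card ≤ (connAt G X v).card + 1 := by
  obtain ⟨a, b, A, B, ha, hb, hA, hB, hd, hU, hva, hvb⟩ := exists_rich_partition hH (hr v hv)
  have hAX : A ⊆ X.erase v := hU ▸ Finset.subset_union_left
  have hBX : B ⊆ X.erase v := hU ▸ Finset.subset_union_right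
  have hvA : v ∉ A := fun h => by simpa using hAX h
  have hvB : v ∉ B := fun h => by simpa using hBX h
  have hcard : A.card + B.card = X.card - 1 := by
    rw [← Finset.card_union_of_disjoint hd, hU, Finset.card_erase_of_mem hv]
  have hX : ∀ x, x ∈ X ↔ x = v ∨ x ∈ A ∨ x ∈ B := by
    intro x
    rw [← Finset.mem_union, hU, Finset.mem_erase]
    by_cases hx : x = v
    · simp [hx, hv]
    · simp [hx]
  have h5 : 0 < A.card := Finset.card_pos.2 hA.nonempty
  have h6 : 0 < B.card := Finset.card_pos.2 hB.nonempty
  have hd' := Finset.disjoint_left.1 hd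
  by_cases hA1 : A.card = 1
  · obtain ⟨a', rfl⟩ := Finset.card_eq_one.1 hA1
    obtain rfl := Finset.mem_singleton.1 ha
    have := connAt_single (by simpa using hX) hvB (by simpa using hd') hB hb hva hvb (by omega) hr
    omega
  by_cases hB1 : B.card = 1
  · obtain ⟨b', rfl⟩ := Finset.card_eq_one.1 hB1
    obtain rfl := Finset.mem_singleton.1 hb
    have := connAt_single (B := A) (a := b) (b := a) (X := X) (v := v)
      (fun x => by rw [hX, Finset.mem_singleton]; tauto) hvA
      (by simpa using hd) hA ha hvb hva (by omega) hr
    omega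
  obtain ⟨F, hF, hFc, -⟩ := exists_family hv (hAX.trans (Finset.erase_subset _ _))
    (hBX.trans (Finset.erase_subset _ _)) hvA hvB hd hva hvb
  have h1 := card_le_connAt hA ha
  have h2 := card_le_connAt hB hb
  have h3 := Finset.card_le_card hF
  have h7 : (A.card + 1) * (B.card + 1) ≤ F.card := by rw [hFc]; gcongr
  obtain ⟨p, hp⟩ := Nat.exists_eq_add_of_le (by omega : 2 ≤ A.card)
  obtain ⟨q, hq⟩ := Nat.exists_eq_add_of_le (by omega : 2 ≤ B.card)
  have : (A.card + 1) * (B.card + 1) ≥ 2 * (A.card + B.card) + 1 := by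
    rw [hp, hq]; nlinarith [Nat.zero_le (p * q)]
  omega

/-! ### The lower bound -/

/-- Connected graphs have at least as many connected induced subgraphs as the path of the same
order. -/
lemma connIn_ge_path (n : ℕ) : ∀ X : Finset V, Conn G X → X.card = n →
    n * (n + 1) ≤ 2 * (connIn G X).card := by
  induction n with
  | zero => intro X hX hc; simp
  | succ n ih =>
    intro X hX hc
    obtain ⟨v, hv⟩ := hX.nonempty
    rcases Nat.lt_or_ge X.card 2 with h | h
    · have h1 := card_connIn_eq G X v
      have h2 := card_le_connAt hX hv
      obtain rfl : n = 0 := by omega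
      omega
    · obtain ⟨y, hy, -, hH⟩ := exists_noncut hX hv h
      have h1 := card_connIn_eq G X y
      have h2 := card_le_connAt hX hy
      have h3 := ih _ hH (by rw [Finset.card_erase_of_mem hy, hc]; rfl)
      rw [hc] at h2
      nlinarith

lemma connIn_ge {X : Finset V} (hX : Conn G X) (h2 : 2 ≤ X.card) {w : V} (hw : w ∈ X)
    (hr : ∀ z ∈ X, z ≠ w → Rich G X z) :
    X.card ^ 2 + 3 * X.card ≤ 2 * (connIn G X).card + 4 := by
  obtain ⟨y, hy, hyw, hH⟩ := exists_noncut hX hw h2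
  have h1 := card_connIn_eq G X y
  have h2 := connAt_rich hy hH (hr y hy hyw)
  have h3 := connIn_ge_path _ _ hH rfl
  obtain ⟨m, hm⟩ : ∃ m, X.card = m + 1 := ⟨X.card - 1, by omega⟩
  rw [Finset.card_erase_of_mem hy, hm, Nat.add_sub_cancel] at h3
  rw [hm] at h2 ⊢
  nlinarith

lemma connIn_gt_of_no_pendant {X : Finset V} (hX : Conn G X) (h4 : 4 ≤ X.card)
    (hr : ∀ z ∈ X, Rich G X z) :
    X.card ^ 2 + 3 * X.card < 2 * (connIn G X).card + 4 := by
  obtain ⟨w, hw⟩ := hX.nonempty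
  obtain ⟨y, hy, hyw, hH⟩ := exists_noncut hX hw (by omega)
  have h1 := card_connIn_eq G X y
  have h2 := connAt_no_pendant hy hH hr h4
  have h3 := connIn_ge_path _ _ hH rfl
  obtain ⟨m, hm⟩ : ∃ m, X.card = m + 1 := ⟨X.card - 1, by omega⟩
  rw [Finset.card_erase_of_mem hy, hm, Nat.add_sub_cancel] at h3
  rw [hm] at h2 ⊢
  nlinarith

/-! ### The extremal graph -/

/-- `f` labels the vertices of `G[X]` by `0, …, n - 1` so that `G[X]` is a triangle `0, 1, 2`
followed by the path `2 - 3 - ⋯ - (n - 1)`. Compared with `tadpole n`, the labels run in the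
opposite direction, so that lengthening the path adds a last label. -/
structure IsTad (G : SimpleGraph V) (X : Finset V) (n : ℕ) (f : ℕ → V) : Prop where
  image : (range n).image f = X
  inj : ∀ i < n, ∀ j < n, f i = f j → i = j
  adj : ∀ i j, i < j → j < n → (G.Adj (f i) (f j) ↔ j = i + 1 ∨ i = 0 ∧ j = 2)

lemma conn_erase_pendant {X : Finset V} (hX : Conn G X) {w w' : V}
    (hw' : w' ∈ X) (hadj : G.Adj w w') (hp : ∀ c ∈ X, G.Adj w c → c = w') :
    Conn G (X.erase w) := by
  have hw'X : w' ∈ X.erase w := Finset.mem_erase.2 ⟨hadj.ne.symm, hw'⟩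
  obtain ⟨S, hS, hmax⟩ := Finset.exists_max_image (connAt G (X.erase w) w') Finset.card
    ⟨{w'}, mem_connAt.2 ⟨by simpa using hw'X, conn_singleton _, by simp⟩⟩
  obtain ⟨hSX, hSc, hwS⟩ := mem_connAt.1 hS
  by_cases h : S = X.erase w
  · exact h ▸ hSc
  obtain ⟨y, hy, hyS⟩ := Finset.exists_of_ssubset (Finset.ssubset_iff_subset_ne.2 ⟨hSX, h⟩)
  obtain ⟨hyw, hyX⟩ := Finset.mem_erase.1 hy
  obtain ⟨c, -, d, hd, h1, h2, h3⟩ := hX.cut (· ∈ insert w S) hw' hyX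
    (Finset.mem_insert_of_mem hwS) (by simp [hyw, hyS])
  simp only [Finset.mem_insert, not_or] at h1 h2
  rcases h1 with rfl | h1
  · exact absurd (hp d hd h3 ▸ hwS) h2.2
  · have := hmax (insert d S) (mem_connAt.2 ⟨Finset.insert_subset
      (Finset.mem_erase.2 ⟨h2.1, hd⟩) hSX, hSc.insert h1 h3, Finset.mem_insert_of_mem hwS⟩)
    rw [Finset.card_insert_of_notMem h2.2] at this
    omega

lemma isTad_three {X : Finset V} (hc : X.card = 3) {w : V} (hw : w ∈ X)
    (hr : ∀ z ∈ X, z ≠ w → Rich G X z) : ∃ f, IsTad G X 3 f ∧ f 2 = w := by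
  obtain ⟨a, b, hab, he⟩ := Finset.card_eq_two.1
    (by rw [Finset.card_erase_of_mem hw, hc] : (X.erase w).card = 2)
  have hX : X = {w, a, b} := by rw [← Finset.insert_erase hw, he]
  have ha : a ≠ w ∧ a ∈ X := Finset.mem_erase.1 (he ▸ by simp)
  have hb : b ≠ w ∧ b ∈ X := Finset.mem_erase.1 (he ▸ by simp)
  have haw : G.Adj a w := by
    obtain ⟨c, hcX, hcb, hac⟩ := hr a ha.2 ha.1 b
    have := hac.ne
    simp only [hX, Finset.mem_insert, Finset.mem_singleton] at hcX
    rcases hcX with rfl | rfl | rfl <;> tauto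
  have habj : G.Adj a b := by
    obtain ⟨c, hcX, hcb, hac⟩ := hr a ha.2 ha.1 w
    have := hac.ne
    simp only [hX, Finset.mem_insert, Finset.mem_singleton] at hcX
    rcases hcX with rfl | rfl | rfl <;> tauto
  have hbw : G.Adj b w := by
    obtain ⟨c, hcX, hcb, hac⟩ := hr b hb.2 hb.1 a
    have := hac.ne
    simp only [hX, Finset.mem_insert, Finset.mem_singleton] at hcX
    rcases hcX with rfl | rfl | rfl <;> tauto
  refine ⟨fun i => if i = 0 then a else if i = 1 then b else w, ⟨?_, ?_, ?_⟩, by simp⟩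
  · rw [hX]
    ext x
    simp [Finset.range_add_one]
    tauto
  · intro i hi j hj
    have := ha.1; have := hb.1; have := this.symm; have := ha.1.symm; have := hab.symm
    interval_cases i <;> interval_cases j <;> simp_all
  · intro i j hij hj
    interval_cases j <;> interval_cases i <;> simp [haw, habj, hbw]

/-- Removing the pendant vertex `w` loses at least `n + 1` connected sets and the bounds for orders
`n` and `n - 1` differ by exactly `n + 1`, so equality is inherited. -/
lemma isTad_of_connIn_le (n : ℕ) (hn : 3 ≤ n) : ∀ (X : Finset V) (w : V), Conn G X →
    X.card = n → w ∈ X → (∀ z ∈ X, z ≠ w → Rich G X z) →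
    2 * (connIn G X).card + 4 ≤ n ^ 2 + 3 * n → ∃ f, IsTad G X n f ∧ f (n - 1) = w := by
  induction n, hn using Nat.le_induction with
  | base => exact fun X w _ hc hw hr _ => isTad_three hc hw hr
  | succ n hn ih =>
    intro X w hX hc hw hr hle
    by_cases hrw : Rich G X w
    · have := connIn_gt_of_no_pendant hX (by omega) (fun z hz => by
        by_cases h : z = w
        · exact h ▸ hrw
        · exact hr z hz h)
      rw [hc] at this
      omega
    simp only [Rich, not_forall] at hrw
    obtain ⟨w', hw'⟩ := hrw
    have hp : ∀ c ∈ X, G.Adj w c → c = w' := by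
      intro c hcX hac
      by_contra h
      exact hw' ⟨c, hcX, h, hac⟩
    obtain ⟨y, hy, hyw, -⟩ := exists_noncut hX hw (by omega)
    obtain ⟨c, -, d, hd, h1, -, h3⟩ := hX.cut (· = w) hw hy rfl hyw
    obtain rfl : c = w := h1
    obtain rfl := hp d hd h3
    have hX' := conn_erase_pendant hX hd h3 hp
    have hc' : (X.erase c).card = n := by rw [Finset.card_erase_of_mem hw, hc]; rfl
    have e1 := card_connIn_eq G X c
    have e2 := card_lt_connAt hX hw (by omega) hr
    obtain ⟨f, hf, hfd⟩ := ih (X.erase c) d hX' hc' (Finset.mem_erase.2 ⟨h3.ne.symm, hd⟩)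
      (by
        intro z hz hzd b
        obtain ⟨hzc, hzX⟩ := Finset.mem_erase.1 hz
        obtain ⟨t, ht, htb, hzt⟩ := hr z hzX hzc b
        refine ⟨t, Finset.mem_erase.2 ⟨?_, ht⟩, htb, hzt⟩
        rintro rfl
        exact hzd (hp z hzX hzt.symm))
      (by rw [hc] at e2; nlinarith)
    have hmem : ∀ i < n, f i ∈ X.erase c := fun i hi =>
      hf.image ▸ Finset.mem_image_of_mem f (Finset.mem_range.2 hi)
    have hlt : ∀ i < n, Function.update f n c i = f i := fun i hi =>
      Function.update_of_ne hi.ne _ _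
    refine ⟨Function.update f n c, ⟨?_, ?_, ?_⟩, by simp⟩
    · rw [Finset.range_add_one, Finset.image_insert, Function.update_self,
        Finset.image_congr (g := f) (fun i hi => hlt i (by simpa using hi)), hf.image,
        Finset.insert_erase hw]
    · intro i hi j hj hij
      rcases Nat.lt_succ_iff_lt_or_eq.1 hi with hi | rfl <;>
        rcases Nat.lt_succ_iff_lt_or_eq.1 hj with hj | rfl
      · rw [hlt i hi, hlt j hj] at hij
        exact hf.inj i hi j hj hij
      · rw [hlt i hi, Function.update_self] at hij
        exact absurd hij (Finset.mem_erase.1 (hmem i hi)).1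
      · rw [hlt j hj, Function.update_self] at hij
        exact absurd hij.symm (Finset.mem_erase.1 (hmem j hj)).1
      · rfl
    · intro i j hij hj
      rcases Nat.lt_succ_iff_lt_or_eq.1 hj with hj | rfl
      · rw [hlt i (by omega), hlt j hj]
        exact hf.adj i j hij hj
      · rw [hlt i hij, Function.update_self]
        constructor
        · intro h
          have h5 := hp (f i) (Finset.mem_erase.1 (hmem i hij)).2 h.symm
          have := hf.inj i hij (j - 1) (by omega) (h5.trans hfd.symm)
          omega
        · intro h
          have : i = j - 1 := by omega
          rw [this, hfd]
          exact h3.symm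

/-- A connected set of labels that skips `k` although it has labels on both sides of `k` must use
the chord `0 - 2`. -/
lemma IsTad.skip {X : Finset V} {n : ℕ} {f : ℕ → V} (h : IsTad G X n f) {S : Finset V}
    (hSX : S ⊆ X) (hS : Conn G S) {i k j : ℕ} (hik : i < k) (hkj : k < j) (hj : j < n)
    (hi' : f i ∈ S) (hk' : f k ∉ S) (hj' : f j ∈ S) : k = 1 := by
  obtain ⟨c, hc, d, hd, ⟨x, hx, rfl⟩, h2, h3⟩ := hS.cut (fun z => ∃ x, x < k ∧ z = f x) hi' hj'
    ⟨i, hik, rfl⟩ (by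
      rintro ⟨x, hx, hjx⟩
      have := h.inj j hj x (by omega) hjx
      omega)
  obtain ⟨y, hy, rfl⟩ := Finset.mem_image.1 (h.image.symm ▸ hSX hd)
  rw [Finset.mem_range] at hy
  have hyk : ¬ y < k := fun hlt => h2 ⟨y, hlt, rfl⟩
  have hyk' : y ≠ k := by rintro rfl; exact hk' hd
  rcases (h.adj x y (by omega) hy).1 h3 with h4 | h4 <;> omega

/-- The connected sets are intervals of labels, or `{0} ∪ [2, j]`. -/
lemma IsTad.connIn_le {X : Finset V} {n : ℕ} {f : ℕ → V} (h : IsTad G X n f) (hn : 3 ≤ n) :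
    2 * (connIn G X).card + 4 ≤ n ^ 2 + 3 * n := by
  have hsub : connIn G X ⊆
      ((range n).biUnion fun j => (range (j + 1)).image fun i => (Finset.Icc i j).image f) ∪
      (range (n - 2)).image fun j => insert (f 0) ((Finset.Icc 2 (j + 2)).image f) := by
    intro S hS
    obtain ⟨hSX, hS⟩ := mem_connIn.1 hS
    set T := (range n).filter (fun i => f i ∈ S) with hT
    have hTm : ∀ i, i ∈ T ↔ i < n ∧ f i ∈ S := by simp [hT]
    have hST : S = T.image f := by
      ext x
      rw [Finset.mem_image]
      constructor
      · intro hx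
        obtain ⟨y, hy, rfl⟩ := Finset.mem_image.1 (h.image.symm ▸ hSX hx)
        exact ⟨y, (hTm y).2 ⟨Finset.mem_range.1 hy, hx⟩, rfl⟩
      · rintro ⟨y, hy, rfl⟩
        exact ((hTm y).1 hy).2
    have hTne : T.Nonempty := by
      have := hS.nonempty
      rw [hST] at this
      exact Finset.image_nonempty.1 this
    set j := T.max' hTne with hj
    set i := T.min' hTne with hi
    have hjT := T.max'_mem hTne
    have hiT := T.min'_mem hTne
    rw [← hj] at hjT
    rw [← hi] at hiT
    have hij : i ≤ j := T.min'_le _ hjT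
    have hle : ∀ x ∈ T, i ≤ x ∧ x ≤ j := fun x hx => ⟨T.min'_le _ hx, T.le_max' _ hx⟩
    have hskip : ∀ k, i < k → k < j → k ∉ T → k = 1 := by
      intro k h1 h2 h3
      have hjn := ((hTm j).1 hjT)
      refine h.skip hSX hS h1 h2 hjn.1 ((hTm i).1 hiT).2 (fun hk => h3 ?_) hjn.2
      exact (hTm k).2 ⟨h2.trans hjn.1, hk⟩
    have hjn := ((hTm j).1 hjT).1
    rw [Finset.mem_union]
    by_cases hall : ∀ k, i < k → k < j → k ∈ T
    · left
      rw [Finset.mem_biUnion]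
      refine ⟨j, Finset.mem_range.2 hjn, Finset.mem_image.2 ⟨i, Finset.mem_range.2 (by omega), ?_⟩⟩
      rw [hST]
      congr 1
      ext k
      rw [Finset.mem_Icc]
      refine ⟨fun hk => ?_, hle k⟩
      rcases hk.1.eq_or_lt with rfl | h1
      · exact hiT
      rcases hk.2.eq_or_lt with rfl | h2
      · exact hjT
      exact hall k h1 h2
    · right
      push Not at hall
      obtain ⟨k, h1, h2, h3⟩ := hall
      obtain rfl := hskip k h1 h2 h3
      have hi0 : i = 0 := by omega
      refine Finset.mem_image.2 ⟨j - 2, Finset.mem_range.2 (by omega), ?_⟩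
      rw [hST, ← Finset.image_insert]
      congr 1
      ext k
      rw [Finset.mem_insert, Finset.mem_Icc]
      constructor
      · rintro (rfl | hk)
        · exact hi0 ▸ hiT
        · by_contra hkT
          rcases (show k ≤ j by omega).eq_or_lt with rfl | h5
          · exact hkT hjT
          · have := hskip k (by omega) h5 hkT
            omega
      · intro hk
        have := hle k hk
        have : k ≠ 1 := by rintro rfl; exact h3 hk
        omega
  have h1 := (Finset.card_le_card hsub).trans (Finset.card_union_le _ _)
  have h2 : ((range n).biUnion fun j =>
      (range (j + 1)).image fun i => (Finset.Icc i j).image f).card ≤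
      ∑ j ∈ range n, (j + 1) :=
    Finset.card_biUnion_le.trans (Finset.sum_le_sum fun j _ =>
      Finset.card_image_le.trans (by simp))
  have h3 : ((range (n - 2)).image fun j =>
      insert (f 0) ((Finset.Icc 2 (j + 2)).image f)).card ≤ n - 2 :=
    Finset.card_image_le.trans (by simp)
  have h4 : (∑ j ∈ range n, (j + 1)) * 2 = n * (n + 1) := by
    have := Finset.sum_range_id_mul_two (n + 1)
    rw [Finset.sum_range_succ'] at this
    simpa [mul_comm] using this
  nlinarith [Nat.sub_add_cancel (show 2 ≤ n by omega)]

/-! ### Passage to the whole graph -/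

lemma numCIS_eq [Fintype V] (G : SimpleGraph V) : numCIS G = (connIn G Finset.univ).card := by
  unfold numCIS
  rw [← Nat.card_eq_finsetCard]
  symm
  refine Nat.card_congr (Fintype.finsetEquivSet.subtypeEquiv fun S => ?_)
  simp only [mem_connIn, Finset.subset_univ, true_and, Conn, Fintype.finsetEquivSet_apply,
    Set.mem_ofPred_eq]
  exact ⟨fun h => ⟨by simpa using Conn.nonempty (S := S) h, h⟩, fun h => h.2⟩

lemma conn_univ [Fintype V] (h : G.Connected) : Conn G Finset.univ := by
  unfold Conn
  rw [Finset.coe_univ]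
  exact (SimpleGraph.induceUnivIso G).connected_iff.2 h

lemma exists_pendant [Fintype V] (h : G.Connected) (h2 : 2 ≤ Fintype.card V)
    (hp : numPendant G = 1) : ∃ w, ∀ z, z ≠ w → Rich G Finset.univ z := by
  unfold numPendant at hp
  obtain ⟨hs, ⟨w⟩⟩ := Nat.card_eq_one_iff_unique.1 hp
  refine ⟨w, fun z hz b => ?_⟩
  by_contra hb
  push Not at hb
  obtain ⟨y, -, hyz, -⟩ := exists_noncut (conn_univ h) (Finset.mem_univ z) (by simpa using h2)
  obtain ⟨c, -, d, -, hc, -, hzd⟩ := (conn_univ h).cut (· = z) (Finset.mem_univ z)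
    (Finset.mem_univ y) rfl hyz
  subst hc
  have hone : ∀ x, G.Adj c x → x = b := by
    intro x hx
    by_contra hxb
    exact hb x (Finset.mem_univ x) hxb hx
  have : Nat.card (G.neighborSet c) = 1 := by
    rw [Nat.card_eq_one_iff_unique]
    refine ⟨⟨fun x y => Subtype.ext ?_⟩, ⟨⟨d, hzd⟩⟩⟩
    rw [hone x x.2, hone y y.2]
  exact hz (congrArg Subtype.val (hs.elim ⟨c, this⟩ w))

lemma tadpole_adj {n : ℕ} (hn : 3 ≤ n) (i j : ℕ) (hij : i < j) (hj : j < n) :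
    (tadpole n).Adj ⟨n - 1 - i, by omega⟩ ⟨n - 1 - j, by omega⟩ ↔
      j = i + 1 ∨ i = 0 ∧ j = 2 := by
  simp only [tadpole, SimpleGraph.fromRel_adj, ne_eq, Fin.mk.injEq]
  omega

lemma isTad_iff_iso [Fintype V] {n : ℕ} (hn : 3 ≤ n) (hc : Fintype.card V = n) :
    (∃ f, IsTad G Finset.univ n f) ↔ Nonempty (G ≃g tadpole n) := by
  constructor
  · rintro ⟨f, hf⟩
    let g : Fin n → V := fun i => f (n - 1 - i)
    have hinj : Function.Injective g := by
      intro i j hij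
      have := hf.inj _ (by omega) _ (by omega) hij
      ext
      omega
    have hbij : Function.Bijective g :=
      (Fintype.bijective_iff_injective_and_card g).2 ⟨hinj, by simp [hc]⟩
    have hlt : ∀ i j : Fin n, i < j → (G.Adj (g i) (g j) ↔ (tadpole n).Adj i j) := by
      intro i j hij
      have hij' : i.val < j.val := hij
      have h1 := hf.adj (n - 1 - j) (n - 1 - i) (by omega) (by omega)
      have h2 := tadpole_adj hn (n - 1 - j) (n - 1 - i) (by omega) (by omega)
      have e1 : (⟨n - 1 - (n - 1 - i), by omega⟩ : Fin n) = i := Fin.ext (by simp; omega)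
      have e2 : (⟨n - 1 - (n - 1 - j), by omega⟩ : Fin n) = j := Fin.ext (by simp; omega)
      rw [e1, e2] at h2
      rw [G.adj_comm, (tadpole n).adj_comm]
      exact h1.trans h2.symm
    refine ⟨SimpleGraph.Iso.symm ⟨Equiv.ofBijective g hbij, ?_⟩⟩
    intro i j
    simp only [Equiv.ofBijective_apply]
    rcases lt_trichotomy i j with h | rfl | h
    · exact hlt i j h
    · simp
    · rw [G.adj_comm, (tadpole n).adj_comm]
      exact hlt j i h
  · rintro ⟨φ⟩
    let f : ℕ → V := fun i => φ.symm ⟨n - 1 - i, by omega⟩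
    have hinj : ∀ i < n, ∀ j < n, f i = f j → i = j := by
      intro i hi j hj hij
      have := φ.symm.injective hij
      simp only [Fin.mk.injEq] at this
      omega
    refine ⟨f, ?_, hinj, fun i j hij hj => ?_⟩
    · apply Finset.eq_univ_of_card
      rw [Finset.card_image_of_injOn, Finset.card_range, hc]
      intro i hi j hj
      exact hinj i (by simpa using hi) j (by simpa using hj)
    · rw [← tadpole_adj hn i j hij hj]
      exact φ.symm.map_adj_iff

end Proof

/-- For a connected graph `G` of order `n ≥ 4` with exactly one pendant vertex,
`N(G) ≥ (n² + 3n − 4)/2`, with equality precisely for the triangle with a path attached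
(stated with both sides doubled to avoid division). -/
theorem stmt_11 {V : Type*} [Fintype V] (n : ℕ) (hn : 4 ≤ n) (G : SimpleGraph V)
    (hconn : G.Connected) (hcard : Fintype.card V = n) (hpend : numPendant G = 1) :
    n ^ 2 + 3 * n - 4 ≤ 2 * numCIS G ∧
    (2 * numCIS G = n ^ 2 + 3 * n - 4 ↔ Nonempty (G ≃g tadpole n)) := by
  obtain ⟨w, hw⟩ := exists_pendant hconn (by omega) hpend
  have hX := conn_univ hconn
  have hc : (Finset.univ : Finset V).card = n := hcard
  have hge := connIn_ge hX (by omega) (Finset.mem_univ w) (fun z _ => hw z)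
  rw [hc] at hge
  rw [numCIS_eq, ← isTad_iff_iso (by omega) hcard]
  refine ⟨by omega, fun h => ?_, ?_⟩
  · obtain ⟨f, hf, -⟩ := isTad_of_connIn_le n (by omega) _ w hX hc (Finset.mem_univ w)
      (fun z _ => hw z) (by omega)
    exact ⟨f, hf⟩
  · rintro ⟨f, hf⟩
    have := hf.connIn_le (by omega)
    omega
end

section
/- Let n ≥ 4 and 2 ≤ p ≤ n − 2, and let G be a connected graph with n vertices of which exactly p are pendant. Then N(G) ≥ 2^p + (n−p−1)(2^{⌊p/2⌋} + 2^{⌈p/2⌉}) + p + (n−p−1)(n−p−2)/2, and equality holds if and only if G is isomorphic to the tree T¹(n,p). -/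
/-- The tree `T¹(n, p)`: a path `0 - 1 - ⋯ - (n-p-1)` on `n - p` vertices, with
`⌊p/2⌋` leaves (the vertices `n-p, …, n-p+⌊p/2⌋-1`) attached to the endpoint `0` and
`⌈p/2⌉` leaves (the vertices `n-p+⌊p/2⌋, …, n-1`) attached to the endpoint `n-p-1`;
equivalently, the tree obtained from the disjoint stars `S_{1+⌊p/2⌋}` and `S_{1+⌈p/2⌉}` by
identifying their central vertices with the two leaves of `P_{n-p}`. -/
def T1 (n p : ℕ) : SimpleGraph (Fin n) :=
  SimpleGraph.fromRel (fun a b =>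
    (b.val = a.val + 1 ∧ b.val ≤ n - p - 1) ∨
    (a.val = 0 ∧ n - p ≤ b.val ∧ b.val < n - p + p / 2) ∨
    (a.val = n - p - 1 ∧ n - p + p / 2 ≤ b.val))

namespace ConnSub
section
open scoped Classical
open Finset

variable {V : Type*}

/-- An enumeration of a finset by `0, …, c - 1`; the value `x₀` is used from `c` on. -/
theorem exists_enum (s : Finset V) (c : ℕ) (h : #s = c) (x₀ : V) :
    ∃ e : ℕ → V, (∀ i < c, e i ∈ s) ∧ ∀ i < c, ∀ j < c, e i = e j → i = j := by
  let E := (s.equivFinOfCardEq h).symm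
  refine ⟨fun i => if h : i < c then (E ⟨i, h⟩).1 else x₀, ?_, ?_⟩
  · intro i hi
    simp only [dif_pos hi]
    exact (E ⟨i, hi⟩).2
  · intro i hi j hj he
    simp only [dif_pos hi, dif_pos hj] at he
    have := E.injective (Subtype.ext he)
    simpa using this

/-! ### Connected vertex sets -/

/-- Connectedness of the subgraph induced by `S`, phrased through cuts: `S` is nonempty, and every
nonempty proper subset `T` of `S` has an edge leaving it inside `S`. -/
def Conn (G : SimpleGraph V) (S : Finset V) : Prop :=
  S.Nonempty ∧ ∀ T ⊆ S, T.Nonempty → T ≠ S → ∃ a ∈ T, ∃ b ∈ S, b ∉ T ∧ G.Adj a b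

theorem connected_iff_conn (G : SimpleGraph V) (S : Finset V) :
    (G.induce (S : Set V)).Connected ↔ Conn G S := by
  constructor
  · intro h
    refine ⟨?_, ?_⟩
    · obtain ⟨x⟩ := h.nonempty
      exact ⟨x.1, x.2⟩
    · intro T hT ⟨x, hx⟩ hne
      obtain ⟨y, hyS, hyT⟩ : ∃ y ∈ S, y ∉ T := by
        by_contra! hcon
        exact hne (Subset.antisymm hT hcon)
      obtain ⟨W⟩ := h.preconnected ⟨x, hT hx⟩ ⟨y, hyS⟩
      obtain ⟨d, -, h1, h2⟩ := W.exists_boundary_dart {z | z.1 ∈ T} hx hyT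
      exact ⟨d.fst.1, h1, d.snd.1, d.snd.2, h2, d.adj⟩
  · rintro ⟨⟨x, hx⟩, h⟩
    have hreach : ∀ y : (S : Set V), (G.induce (S : Set V)).Reachable ⟨x, hx⟩ y := by
      by_contra! hcon
      obtain ⟨y, hy⟩ := hcon
      let T : Finset V := S.filter fun z => ∃ hz : z ∈ S,
        (G.induce (S : Set V)).Reachable ⟨x, hx⟩ ⟨z, hz⟩
      obtain ⟨a, ha, b, hb, hbT, hab⟩ := h T (filter_subset _ _)
        ⟨x, by simp only [T, mem_filter]; exact ⟨hx, hx, SimpleGraph.Reachable.refl _⟩⟩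
        (by
          intro he
          have : y.1 ∈ T := by rw [he]; exact y.2
          simp only [T, mem_filter] at this
          obtain ⟨_, _, hr⟩ := this
          exact hy hr)
      simp only [T, mem_filter] at ha hbT
      obtain ⟨_, ha', hr⟩ := ha
      refine hbT ⟨hb, hb, hr.trans (SimpleGraph.Adj.reachable ?_)⟩
      exact hab
    have : Nonempty (S : Set V) := ⟨⟨x, hx⟩⟩
    exact SimpleGraph.Connected.mk fun a b => (hreach a).symm.trans (hreach b)

variable {G : SimpleGraph V}

theorem conn_singleton (v : V) : Conn G {v} := by
  refine ⟨singleton_nonempty v, fun T hT hn hne => ?_⟩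
  rcases subset_singleton_iff.1 hT with h | h
  · simp [h] at hn
  · exact absurd h hne

theorem Conn.insert {S : Finset V} (hS : Conn G S) {u v : V} (hu : u ∈ S) (huv : G.Adj u v) :
    Conn G (insert v S) := by
  refine ⟨insert_nonempty _ _, fun T hT hn hne => ?_⟩
  by_cases hvS : v ∈ S
  · rw [insert_eq_of_mem hvS] at hT hne ⊢
    exact hS.2 T hT hn hne
  by_cases h1 : (T ∩ S).Nonempty
  · by_cases h2 : T ∩ S = S
    · have hST : S ⊆ T := inter_eq_right.1 h2
      have hvT : v ∉ T := fun h => hne (Subset.antisymm hT (insert_subset h hST))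
      exact ⟨u, hST hu, v, mem_insert_self _ _, hvT, huv⟩
    · obtain ⟨a, ha, b, hb, hbT, hab⟩ := hS.2 (T ∩ S) inter_subset_right h1 h2
      exact ⟨a, (mem_inter.1 ha).1, b, mem_insert_of_mem hb,
        fun h => hbT (mem_inter.2 ⟨h, hb⟩), hab⟩
  · rw [not_nonempty_iff_eq_empty] at h1
    obtain ⟨t, ht⟩ := hn
    have hnot : ∀ x ∈ S, x ∉ T := fun x hx hxT => by
      have : x ∈ T ∩ S := mem_inter.2 ⟨hxT, hx⟩
      simp [h1] at this
    have htv : t = v := (mem_insert.1 (hT ht)).resolve_right fun h => hnot t h ht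
    subst htv
    exact ⟨t, ht, u, mem_insert_of_mem hu, hnot u hu, huv.symm⟩

theorem conn_pair {u v : V} (h : G.Adj u v) : Conn G {u, v} := by
  have := (conn_singleton (G := G) v).insert (mem_singleton_self v) h.symm
  exact this

/-- A connected set can be exhausted from any of its vertices by adding one vertex at a time. Taken
with one vertex fewer than `C`, the set `S` shows that `C` has a non-cut vertex. -/
theorem Conn.exists_conn_card {C : Finset V} (hC : Conn G C) {u : V} (hu : u ∈ C) (m : ℕ)
    (hm : m + 1 ≤ #C) : ∃ S ⊆ C, u ∈ S ∧ Conn G S ∧ #S = m + 1 := by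
  induction m with
  | zero => exact ⟨{u}, by simpa using hu, by simp, conn_singleton u, by simp⟩
  | succ m ih =>
    obtain ⟨S, hSC, huS, hS, hcard⟩ := ih (by omega)
    obtain ⟨a, ha, b, hb, hbS, hab⟩ := hC.2 S hSC ⟨u, huS⟩ (by rintro rfl; omega)
    exact ⟨Insert.insert b S, insert_subset hb hSC, mem_insert_of_mem huS, hS.insert ha hab,
      by rw [card_insert_of_notMem hbS, hcard]⟩

/-! ### The weighted count and its lower bound -/

/-- For `a + b = p` the sum `2 ^ a + 2 ^ b` is least for balanced `a`, `b`, and only then. -/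
theorem bal_le {a b p : ℕ} (h : a + b = p) :
    2 ^ (p / 2) + 2 ^ ((p + 1) / 2) ≤ 2 ^ a + 2 ^ b ∧
    (2 ^ a + 2 ^ b ≤ 2 ^ (p / 2) + 2 ^ ((p + 1) / 2) → a = p / 2 ∨ a = (p + 1) / 2) := by
  have key : ∀ a b : ℕ, a + b = p → a < p / 2 →
      2 ^ (p / 2) + 2 ^ ((p + 1) / 2) < 2 ^ a + 2 ^ b := by
    intro a b h ha
    have h1 : 2 ^ ((p + 1) / 2 + 1) ≤ 2 ^ b := Nat.pow_le_pow_right (by norm_num) (by omega)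
    have h2 : 2 ^ (p / 2) ≤ 2 ^ ((p + 1) / 2) := Nat.pow_le_pow_right (by norm_num) (by omega)
    have h3 : 0 < 2 ^ a := by positivity
    rw [pow_succ] at h1
    omega
  rcases lt_or_ge a (p / 2) with h1 | h1
  · have := key a b h h1
    omega
  rcases lt_or_ge b (p / 2) with h2 | h2
  · have := key b a (by omega) h2
    omega
  have h3 : a = p / 2 ∨ a = (p + 1) / 2 := by omega
  refine ⟨?_, fun _ => h3⟩
  rcases h3 with h3 | h3
  · rw [h3, show b = (p + 1) / 2 by omega]
  · rw [h3, show b = p / 2 by omega, add_comm]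

/-- The (nonempty) connected subsets of `C`. -/
noncomputable def conns (G : SimpleGraph V) (C : Finset V) : Finset (Finset V) :=
  C.powerset.filter (Conn G)

/-- The weighted count of the connected subsets `S` of `C`, where `S` counts `2 ^ w(S)`. -/
noncomputable def F (G : SimpleGraph V) (C : Finset V) (w : V → ℕ) : ℕ :=
  ∑ S ∈ conns G C, 2 ^ (∑ x ∈ S, w x)

theorem mem_conns {C S : Finset V} : S ∈ conns G C ↔ S ⊆ C ∧ Conn G S := by
  simp [conns]

/-- `C` induces the path `f 0 - f 1 - ⋯ - f m`, and its inner vertices have weight zero. The values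
of `f` beyond `m` are irrelevant. -/
structure IsPath (G : SimpleGraph V) (C : Finset V) (w : V → ℕ) (m : ℕ) (f : ℕ → V) : Prop where
  inj : ∀ i ≤ m, ∀ j ≤ m, f i = f j → i = j
  mem : ∀ x, x ∈ C ↔ ∃ i ≤ m, f i = x
  adj : ∀ i ≤ m, ∀ j ≤ m, (G.Adj (f i) (f j) ↔ i + 1 = j ∨ j + 1 = i)
  zero : ∀ i, 0 < i → i < m → w (f i) = 0

theorem IsPath.reverse {C : Finset V} {w : V → ℕ} {m : ℕ} {f : ℕ → V}
    (h : IsPath G C w m f) : IsPath G C w m fun i => f (m - i) where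
  inj i hi j hj e := by
    have := h.inj _ (by omega) _ (by omega) e
    omega
  mem x := by
    rw [h.mem]
    constructor
    · rintro ⟨i, hi, rfl⟩
      exact ⟨m - i, by omega, by congr 1; omega⟩
    · rintro ⟨i, hi, rfl⟩
      exact ⟨m - i, by omega, rfl⟩
  adj i hi j hj := by
    rw [h.adj _ (by omega) _ (by omega)]
    omega
  zero i h0 hm := h.zero _ (by omega) (by omega)

/-- At least `#C` connected subsets of `C` contain `u`, because every size from `1` to `#C` occurs.
If there are no more than that, then each size occurs once; comparing sets of size two,
`u` has at most one neighbour in `C`. -/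
theorem card_conns_containing {C : Finset V} (hC : Conn G C) {u : V} (hu : u ∈ C) :
    #C ≤ #((conns G C).filter (u ∈ ·)) ∧
    (#((conns G C).filter (u ∈ ·)) ≤ #C →
      ∀ x ∈ C, ∀ y ∈ C, G.Adj u x → G.Adj u y → x = y) := by
  have hsurj : Set.SurjOn Finset.card ((conns G C).filter (u ∈ ·) : Set (Finset V))
      (Finset.Icc 1 #C : Set ℕ) := by
    intro m hm
    simp only [coe_Icc, Set.mem_Icc] at hm
    obtain ⟨S, h1, h2, h3, h4⟩ := hC.exists_conn_card hu (m - 1) (by omega)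
    refine ⟨S, ?_, by omega⟩
    simp only [coe_filter, Set.mem_ofPred_eq, mem_conns]
    exact ⟨⟨h1, h3⟩, h2⟩
  have hmaps : Set.MapsTo Finset.card ((conns G C).filter (u ∈ ·) : Set (Finset V))
      (Finset.Icc 1 #C : Set ℕ) := by
    intro S hS
    simp only [coe_filter, Set.mem_ofPred_eq, mem_conns] at hS
    simp only [coe_Icc, Set.mem_Icc]
    exact ⟨card_pos.2 ⟨u, hS.2⟩, card_le_card hS.1.1⟩
  constructor
  · have := card_le_card_of_surjOn _ hsurj
    simpa using this
  · intro hle x hx y hy hux huy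
    have hinj := injOn_of_surjOn_of_card_le _ hmaps hsurj (by simpa using hle)
    have hmem : ∀ z ∈ C, G.Adj u z → ({u, z} : Finset V) ∈
        ((conns G C).filter (u ∈ ·) : Set (Finset V)) := by
      intro z hz huz
      simp only [coe_filter, Set.mem_ofPred_eq, mem_conns]
      refine ⟨⟨?_, conn_pair huz⟩, by simp⟩
      intro t ht
      simp only [mem_insert, mem_singleton] at ht
      rcases ht with rfl | rfl <;> assumption
    have he := hinj (hmem x hx hux) (hmem y hy huy)
      (by rw [card_pair hux.ne, card_pair huy.ne])
    have : x ∈ ({u, y} : Finset V) := he ▸ (by simp)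
    simp only [mem_insert, mem_singleton] at this
    exact this.resolve_left hux.ne'


/-- The lower bound for the weighted count on a connected set of `m + 1` vertices with total weight
`p`. Equality forces a path with inner weights zero and, if `m ≥ 1`, the weight `⌊p/2⌋` or `⌈p/2⌉`
at its first vertex. -/
theorem F_lower (m : ℕ) : ∀ (C : Finset V) (w : V → ℕ) (p : ℕ), Conn G C → #C = m + 1 →
    ∑ x ∈ C, w x = p →
    2 ^ p + m * (2 ^ (p / 2) + 2 ^ ((p + 1) / 2)) + m * (m - 1) / 2 ≤ F G C w ∧
    (F G C w ≤ 2 ^ p + m * (2 ^ (p / 2) + 2 ^ ((p + 1) / 2)) + m * (m - 1) / 2 →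
      ∃ f, IsPath G C w m f ∧ (1 ≤ m → w (f 0) = p / 2 ∨ w (f 0) = (p + 1) / 2)) := by
  induction m with
  | zero =>
    intro C w p hC hcard hw
    have hF : 2 ^ p ≤ F G C w := by
      have := single_le_sum (f := fun S => 2 ^ (∑ x ∈ S, w x)) (s := conns G C)
        (fun _ _ => Nat.zero_le _) (mem_conns.2 ⟨Subset.refl C, hC⟩)
      simpa [hw, F] using this
    refine ⟨by simpa using hF, fun _ => ?_⟩
    obtain ⟨x, rfl⟩ := card_eq_one.1 hcard
    refine ⟨fun _ => x, ⟨?_, ?_, ?_, ?_⟩, by omega⟩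
    · intros; omega
    · intro y
      simp only [mem_singleton]
      exact ⟨fun h => ⟨0, le_rfl, h.symm⟩, fun ⟨_, _, h⟩ => h.symm⟩
    · intro i hi j hj
      simp only [SimpleGraph.irrefl, false_iff]
      omega
    · intros; omega
  | succ m ih =>
    intro C w p hC hcard hw
    obtain ⟨x, hx⟩ := hC.1
    obtain ⟨C', hC'C, -, hC', hcard'⟩ := hC.exists_conn_card hx m (by omega)
    obtain ⟨u, hu, v, hvC, hvC', huv⟩ := hC.2 C' hC'C hC'.1 (by rintro rfl; omega)
    have hCe : C = insert v C' := by
      symm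
      apply eq_of_subset_of_card_le (insert_subset hvC hC'C)
      rw [card_insert_of_notMem hvC']
      omega
    -- The weight on `C'` obtained by contracting the edge `uv`.
    let w' : V → ℕ := fun x => w x + if x = u then w v else 0
    have hw'S : ∀ S : Finset V, ∑ x ∈ S, w' x = ∑ x ∈ S, w x + if u ∈ S then w v else 0 := by
      intro S
      simp [w', sum_add_distrib]
    have hwC : w v + ∑ x ∈ C', w x = p := by
      rw [← hw, hCe, sum_insert hvC']
    obtain ⟨ih1, ih2⟩ := ih C' w' p hC' hcard' (by rw [hw'S, if_pos hu]; omega)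
    -- Preimages under the contraction: sets containing both or neither of `u` and `v`.
    let φ : Finset V → Finset V := fun S => if u ∈ S then insert v S else S
    have hφerase : ∀ S ∈ conns G C', (φ S).erase v = S := by
      intro S hS
      have hvS : v ∉ S := fun h => hvC' ((mem_conns.1 hS).1 h)
      by_cases h : u ∈ S
      · simp only [φ, if_pos h]
        exact erase_insert hvS
      · simp only [φ, if_neg h]
        exact erase_eq_of_notMem hvS
    have hφinj : Set.InjOn φ (conns G C' : Set (Finset V)) := by
      intro S hS T hT h
      rw [← hφerase S hS, ← hφerase T hT, h]
    set A := (conns G C').image φ with hA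
    set B := (conns G C').filter (u ∈ ·) with hB
    have huv' : u ≠ v := huv.ne
    have hAuv : ∀ S ∈ A, (v ∈ S ↔ u ∈ S) := by
      intro S hS
      obtain ⟨T, hT, rfl⟩ := mem_image.1 hS
      have hvT : v ∉ T := fun h => hvC' ((mem_conns.1 hT).1 h)
      by_cases h : u ∈ T <;> simp [φ, h, hvT]
    have hBuv : ∀ S ∈ B, u ∈ S ∧ v ∉ S := by
      intro S hS
      obtain ⟨h1, h2⟩ := mem_filter.1 hS
      exact ⟨h2, fun h => hvC' ((mem_conns.1 h1).1 h)⟩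
    have hAB : Disjoint A B := by
      rw [disjoint_left]
      intro S h1 h2
      have := hAuv S h1
      have := hBuv S h2
      tauto
    have hD : Disjoint (A ∪ B) {{v}} := by
      rw [disjoint_singleton_right, mem_union]
      rintro (h | h)
      · have := hAuv _ h
        simp [huv'] at this
      · have := hBuv _ h
        simp at this
    have hsub : (A ∪ B) ∪ {{v}} ⊆ conns G C := by
      intro S hS
      rw [mem_union, mem_union, mem_singleton] at hS
      rcases hS with (h | h) | rfl
      · obtain ⟨T, hT, rfl⟩ := mem_image.1 h
        obtain ⟨h1, h2⟩ := mem_conns.1 hT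
        rw [mem_conns]
        by_cases h : u ∈ T
        · simp only [φ, if_pos h]
          exact ⟨insert_subset hvC (h1.trans hC'C), h2.insert h huv⟩
        · simp only [φ, if_neg h]
          exact ⟨h1.trans hC'C, h2⟩
      · obtain ⟨h1, h2⟩ := mem_conns.1 (mem_filter.1 h).1
        exact mem_conns.2 ⟨h1.trans hC'C, h2⟩
      · exact mem_conns.2 ⟨singleton_subset_iff.2 hvC, conn_singleton v⟩
    -- The connected sets not yet counted; equality forces this to be empty.
    set E := conns G C \ ((A ∪ B) ∪ {{v}}) with hE
    have hC'B : C' ∈ B := mem_filter.2 ⟨mem_conns.2 ⟨Subset.refl _, hC'⟩, hu⟩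
    have hsumA : ∑ S ∈ A, 2 ^ (∑ x ∈ S, w x) = F G C' w' := by
      rw [hA, sum_image hφinj, F]
      refine sum_congr rfl fun S hS => ?_
      have hvS : v ∉ S := fun h => hvC' ((mem_conns.1 hS).1 h)
      rw [hw'S]
      by_cases h : u ∈ S
      · simp only [φ, if_pos h, sum_insert hvS]
        rw [add_comm]
      · simp [φ, if_neg h]
    have hsumB : ∑ S ∈ B, 2 ^ (∑ x ∈ S, w x) =
        ∑ S ∈ B.erase C', 2 ^ (∑ x ∈ S, w x) + 2 ^ (∑ x ∈ C', w x) :=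
      (sum_erase_add _ _ hC'B).symm
    -- From `1 + k ≤ 2 ^ k`; the weight term vanishes when equality holds.
    have hsumB' : #(B.erase C') + ∑ S ∈ B.erase C', ∑ x ∈ S, w x ≤
        ∑ S ∈ B.erase C', 2 ^ (∑ x ∈ S, w x) := by
      rw [card_eq_sum_ones, ← sum_add_distrib]
      refine sum_le_sum fun S _ => ?_
      have := Nat.lt_two_pow_self (n := ∑ x ∈ S, w x)
      omega
    have hBcard : #(B.erase C') + 1 = #B := card_erase_add_one hC'B
    have hsumE : #E ≤ ∑ S ∈ E, 2 ^ (∑ x ∈ S, w x) := by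
      rw [card_eq_sum_ones]
      exact sum_le_sum fun S _ => Nat.one_le_two_pow
    have hFsum : F G C w = F G C' w' + (∑ S ∈ B.erase C', 2 ^ (∑ x ∈ S, w x) +
        2 ^ (∑ x ∈ C', w x)) + 2 ^ (w v) + ∑ S ∈ E, 2 ^ (∑ x ∈ S, w x) := by
      rw [F, ← sum_sdiff hsub, sum_union hD, sum_union hAB, hsumA, hsumB, sum_singleton,
        sum_singleton, add_comm]
    obtain ⟨hB1, hB2⟩ := card_conns_containing hC' hu
    rw [← hB] at hB1 hB2
    obtain ⟨hbal1, hbal2⟩ := bal_le hwC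
    have htri := Nat.triangle_succ m
    have hmul : (m + 1) * (2 ^ (p / 2) + 2 ^ ((p + 1) / 2)) =
      m * (2 ^ (p / 2) + 2 ^ ((p + 1) / 2)) + (2 ^ (p / 2) + 2 ^ ((p + 1) / 2)) := by ring
    refine ⟨by omega, fun hle => ?_⟩
    obtain ⟨f₀, hf₀, -⟩ := ih2 (by omega)
    have hwv := hbal2 (by omega)
    have hBdeg := hB2 (by omega)
    have hB0 : ∑ S ∈ B.erase C', ∑ x ∈ S, w x = 0 := by omega
    have hE0 : E = ∅ := card_eq_zero.1 (by omega)
    have hvadj : ∀ x ∈ C', G.Adj v x → x = u := by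
      intro x hx hvx
      by_contra hne
      have hmem : ({v, x} : Finset V) ∈ E := by
        rw [hE, mem_sdiff, mem_conns]
        refine ⟨⟨?_, conn_pair hvx⟩, ?_⟩
        · intro t ht
          simp only [mem_insert, mem_singleton] at ht
          rcases ht with rfl | rfl
          · exact hvC
          · exact hC'C hx
        · rw [mem_union, mem_union, mem_singleton]
          rintro ((h | h) | h)
          · have := hAuv _ h
            simp [huv', Ne.symm hne] at this
          · have := hBuv _ h
            simp at this
          · have : x ∈ ({v} : Finset V) := h ▸ (by simp)
            simp only [mem_singleton] at this
            exact hvx.ne this.symm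
      simp [hE0] at hmem
    have hwu : 1 ≤ m → w u = 0 := by
      intro hm
      have hmem : ({u} : Finset V) ∈ B.erase C' := by
        refine mem_erase.2 ⟨?_, mem_filter.2 ⟨mem_conns.2 ⟨by simpa using hu,
          conn_singleton u⟩, by simp⟩⟩
        rintro h
        rw [← h, card_singleton] at hcard'
        omega
      have := sum_eq_zero_iff.1 hB0 _ hmem
      simpa using this
    -- As `u` has at most one neighbour in `C'`, it is an end of the path.
    obtain ⟨f, hf, hf0⟩ : ∃ f, IsPath G C' w' m f ∧ f 0 = u := by
      obtain ⟨i, hi, hfi⟩ := (hf₀.mem u).1 hu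
      by_cases h0 : i = 0
      · exact ⟨f₀, hf₀, by rw [← h0, hfi]⟩
      by_cases h1 : i = m
      · exact ⟨_, hf₀.reverse, by simp [← h1, hfi]⟩
      exfalso
      have := hBdeg (f₀ (i - 1)) ((hf₀.mem _).2 ⟨i - 1, by omega, rfl⟩)
        (f₀ (i + 1)) ((hf₀.mem _).2 ⟨i + 1, by omega, rfl⟩)
        (by rw [← hfi, hf₀.adj _ hi _ (by omega)]; omega)
        (by rw [← hfi, hf₀.adj _ hi _ (by omega)]; omega)
      have := hf₀.inj _ (by omega) _ (by omega) this
      omega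
    have hfC' : ∀ i ≤ m, f i ∈ C' := fun i hi => (hf.mem _).2 ⟨i, hi, rfl⟩
    have hfv : ∀ i ≤ m, f i ≠ v := fun i hi h => hvC' (h ▸ hfC' i hi)
    have hvf : ∀ i ≤ m, (G.Adj v (f i) ↔ i = 0) := by
      intro i hi
      constructor
      · intro h
        exact hf.inj i hi 0 (by omega) (by rw [hf0, hvadj _ (hfC' i hi) h])
      · rintro rfl
        rw [hf0]
        exact huv.symm
    let g : ℕ → V := fun i => if i = 0 then v else f (i - 1)
    have hg0 : g 0 = v := rfl
    have hg1 : ∀ i, g (i + 1) = f i := fun i => rfl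
    refine ⟨g, ⟨?_, ?_, ?_, ?_⟩, fun _ => hwv⟩
    · rintro (_ | i) hi (_ | j) hj h
      · rfl
      · exact absurd h.symm (hfv j (by omega))
      · exact absurd h (hfv i (by omega))
      · rw [hf.inj i (by omega) j (by omega) h]
    · intro x
      rw [hCe, mem_insert, hf.mem]
      constructor
      · rintro (rfl | ⟨i, hi, rfl⟩)
        · exact ⟨0, by omega, rfl⟩
        · exact ⟨i + 1, by omega, rfl⟩
      · rintro ⟨_ | i, hi, rfl⟩
        · exact Or.inl rfl
        · exact Or.inr ⟨i, by omega, rfl⟩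
    · rintro (_ | i) hi (_ | j) hj
      · simp
      · rw [hg0, hg1, hvf j (by omega)]
        omega
      · rw [hg0, hg1, G.adj_comm, hvf i (by omega)]
        omega
      · rw [hg1, hg1, hf.adj i (by omega) j (by omega)]
        omega
    · rintro (_ | i) h0 hm
      · omega
      · rw [hg1]
        rcases Nat.eq_zero_or_pos i with rfl | hi
        · rw [hf0]
          exact hwu (by omega)
        · have := hf.zero i hi (by omega)
          simp only [w'] at this
          omega


/-! ### Weighted paths -/

/-- The connected subsets of a path are its intervals. -/
theorem IsPath.conn_eq_image {C : Finset V} {w : V → ℕ} {m : ℕ} {f : ℕ → V}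
    (h : IsPath G C w m f) {S : Finset V} (hSC : S ⊆ C) (hS : Conn G S) :
    ∃ i j, i ≤ j ∧ j ≤ m ∧ S = (Icc i j).image f := by
  let J := (range (m + 1)).filter fun i => f i ∈ S
  have hJ : ∀ i, i ∈ J ↔ i ≤ m ∧ f i ∈ S := by
    intro i
    simp [J]
  have hJn : J.Nonempty := by
    obtain ⟨x, hx⟩ := hS.1
    obtain ⟨i, hi, rfl⟩ := (h.mem x).1 (hSC hx)
    exact ⟨i, (hJ i).2 ⟨hi, hx⟩⟩
  have hmin := (hJ _).1 (J.min'_mem hJn)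
  have hmax := (hJ _).1 (J.max'_mem hJn)
  refine ⟨J.min' hJn, J.max' hJn, J.min'_le _ (J.max'_mem hJn), hmax.1, ?_⟩
  ext x
  simp only [mem_image, mem_Icc]
  constructor
  · intro hx
    obtain ⟨i, hi, rfl⟩ := (h.mem x).1 (hSC hx)
    have : i ∈ J := (hJ i).2 ⟨hi, hx⟩
    exact ⟨i, ⟨J.min'_le _ this, J.le_max' _ this⟩, rfl⟩
  · rintro ⟨t, ⟨h1, h2⟩, rfl⟩
    by_contra htS
    have hlt : J.min' hJn < t := lt_of_le_of_ne h1 (by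
      intro he
      exact htS (he ▸ hmin.2))
    -- If `f t` is missing, no edge leaves the part of `S` before `f t`.
    obtain ⟨a, ha, b, hb, hbT, hab⟩ := hS.2 (S.filter fun x => ∃ s < t, f s = x)
      (filter_subset _ _) ⟨f (J.min' hJn), mem_filter.2 ⟨hmin.2, _, hlt, rfl⟩⟩ (by
        intro he
        have := hmax.2
        rw [← he, mem_filter] at this
        obtain ⟨_, s, hs, hfs⟩ := this
        have := h.inj s (by omega) _ hmax.1 hfs
        omega)
    obtain ⟨_, s, hs, rfl⟩ := mem_filter.1 ha
    obtain ⟨r, hr, rfl⟩ := (h.mem b).1 (hSC hb)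
    have hrt : ¬ r < t := fun hlt => hbT (mem_filter.2 ⟨hb, r, hlt, rfl⟩)
    have hrt' : r ≠ t := fun he => htS (he ▸ hb)
    have := (h.adj s (by omega) r hr).1 hab
    omega

/-- The weighted count of a path, bounded by the sum over all its intervals. -/
theorem F_upper {C : Finset V} {w : V → ℕ} {m : ℕ} {f : ℕ → V} (h : IsPath G C w m f)
    (hm : 1 ≤ m) :
    F G C w ≤ 2 ^ (w (f 0) + w (f m)) + m * (2 ^ w (f 0) + 2 ^ w (f m)) + m * (m - 1) / 2 := by
  set a := w (f 0) with ha
  set b := w (f m) with hb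
  have hwt : ∀ t ≤ m, w (f t) = (if t = 0 then a else 0) + (if t = m then b else 0) := by
    intro t ht
    rcases Nat.eq_zero_or_pos t with rfl | h0
    · rw [if_pos rfl, if_neg (by omega)]
      rfl
    rcases Nat.eq_or_lt_of_le ht with rfl | h1
    · rw [if_neg (by omega), if_pos rfl, zero_add]
    · rw [if_neg (by omega), if_neg (by omega), h.zero t h0 h1]
  have hwI : ∀ i j, i ≤ j → j ≤ m → ∑ x ∈ (Icc i j).image f, w x =
      (if i = 0 then a else 0) + (if j = m then b else 0) := by
    intro i j hij hj
    rw [sum_image]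
    · rw [sum_congr rfl (g := fun t => (if t = 0 then a else 0) + (if t = m then b else 0))
        fun t ht => hwt t ((mem_Icc.1 ht).2.trans hj), sum_add_distrib, sum_ite_eq', sum_ite_eq']
      simp only [mem_Icc]
      congr 1
      · exact if_congr (by omega) rfl rfl
      · exact if_congr (by omega) rfl rfl
    · intro s hs t ht he
      simp only [coe_Icc, Set.mem_Icc] at hs ht
      exact h.inj s (by omega) t (by omega) he
  have hsub : conns G C ⊆ ((range (m + 1)).sigma fun i => Icc i m).image
      fun q => (Icc q.1 q.2).image f := by
    intro S hS
    obtain ⟨h1, h2⟩ := mem_conns.1 hS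
    obtain ⟨i, j, hij, hj, rfl⟩ := h.conn_eq_image h1 h2
    exact mem_image.2 ⟨⟨i, j⟩, by simp; omega, rfl⟩
  have hle : F G C w ≤ ∑ i ∈ range (m + 1), ∑ j ∈ Icc i m,
      2 ^ ((if i = 0 then a else 0) + (if j = m then b else 0)) := by
    rw [sum_sigma']
    refine (sum_le_sum_of_subset hsub).trans ?_
    refine (sum_image_le_of_nonneg ?_).trans ?_
    · intros; exact Nat.zero_le _
    · refine le_of_eq (sum_congr rfl ?_)
      rintro ⟨i, j⟩ hij
      simp only [mem_sigma, mem_range, mem_Icc] at hij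
      rw [hwI i j (by omega) (by omega)]
  refine hle.trans (le_of_eq ?_)
  have hinner : ∀ c i, i ≤ m → ∑ j ∈ Icc i m, 2 ^ (c + (if j = m then b else 0)) =
      (m - i) * 2 ^ c + 2 ^ (c + b) := by
    intro c i hi
    rw [← Ico_insert_right hi, sum_insert (by simp), if_pos rfl, add_comm]
    congr 1
    rw [sum_congr rfl (g := fun _ => 2 ^ c)]
    · simp
    · intro j hj
      rw [if_neg (by simp at hj; omega), add_zero]
  rw [sum_range_succ', if_pos rfl, hinner a 0 (by omega),
    sum_congr rfl (g := fun i => (m - 1 - i) + 2 ^ b), sum_add_distrib,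
    sum_range_reflect (fun i => i) m, sum_range_id]
  · simp
    ring
  · intro i hi
    have := mem_range.1 hi
    rw [if_neg (by omega), hinner 0 (i + 1) (by omega)]
    simp
    omega

theorem IsPath.sum_eq {C : Finset V} {w : V → ℕ} {m : ℕ} {f : ℕ → V}
    (h : IsPath G C w m f) (hm : 1 ≤ m) : ∑ x ∈ C, w x = w (f 0) + w (f m) := by
  have hne : f 0 ≠ f m := fun he => by
    have := h.inj 0 (by omega) m le_rfl he
    omega
  rw [← sum_pair hne]
  symm
  refine sum_subset ?_ ?_
  · intro x hx
    rw [mem_insert, mem_singleton] at hx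
    rw [h.mem]
    rcases hx with rfl | rfl
    · exact ⟨0, by omega, rfl⟩
    · exact ⟨m, le_rfl, rfl⟩
  · intro x hx hx'
    obtain ⟨i, hi, rfl⟩ := (h.mem x).1 hx
    rw [mem_insert, mem_singleton, not_or] at hx'
    have h1 : i ≠ 0 := fun he => hx'.1 (by rw [he])
    have h2 : i ≠ m := fun he => hx'.2 (by rw [he])
    exact h.zero i (by omega) (by omega)

/-! ### Reduction to the core -/

section Pendant
variable [Fintype V]

/-- The finset of vertices of degree one. -/
noncomputable def pendants (G : SimpleGraph V) : Finset V :=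
  univ.filter fun v => Nat.card (G.neighborSet v) = 1

/-- The non-pendant vertices. -/
noncomputable def core (G : SimpleGraph V) : Finset V := (pendants G)ᶜ

/-- The pendant vertices adjacent to `v`. -/
noncomputable def leavesAt (G : SimpleGraph V) (v : V) : Finset V :=
  (pendants G).filter (G.Adj · v)

/-- The number of pendant vertices adjacent to `v`. -/
noncomputable def wt (G : SimpleGraph V) (v : V) : ℕ := #(leavesAt G v)

theorem card_pendants : #(pendants G) = numPendant G := by
  rw [numPendant, pendants, Nat.card_eq_fintype_card, Fintype.card_subtype]
  rfl

theorem mem_pendants {x : V} : x ∈ pendants G ↔ ∃ y, ∀ z, G.Adj x z ↔ z = y := by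
  simp only [pendants, mem_filter, mem_univ, true_and]
  rw [Nat.card_coe_set_eq, Set.ncard_eq_one]
  refine exists_congr fun y => ?_
  simp [Set.ext_iff, SimpleGraph.mem_neighborSet]

theorem mem_core {x : V} : x ∈ core G ↔ x ∉ pendants G := mem_compl

theorem mem_leavesAt {x v : V} : x ∈ leavesAt G v ↔ x ∈ pendants G ∧ G.Adj x v := by
  simp [leavesAt]

theorem numCIS_eq_card : numCIS G = #(conns G univ) := by
  have : {S : Set V | S.Nonempty ∧ (G.induce S).Connected} =
      (fun T : Finset V => (T : Set V)) '' (conns G univ : Set (Finset V)) := by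
    ext S
    simp only [Set.mem_ofPred_eq, Set.mem_image, mem_coe, mem_conns]
    constructor
    · rintro ⟨-, h⟩
      refine ⟨S.toFinset, ⟨subset_univ _, ?_⟩, by simp⟩
      rw [← connected_iff_conn, Set.coe_toFinset]
      exact h
    · rintro ⟨T, ⟨-, hT⟩, rfl⟩
      exact ⟨hT.1, (connected_iff_conn G T).2 hT⟩
  rw [numCIS, Nat.card_coe_set_eq, this, Set.ncard_image_of_injective _ coe_injective,
    Set.ncard_coe_finset]

/-- With at least three vertices, the neighbour of a pendant vertex is not pendant: two adjacent
pendant vertices would form a whole component. -/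
theorem exists_nbr (hG : Conn G univ) (h3 : 3 ≤ Fintype.card V) {x : V} (hx : x ∈ pendants G) :
    ∃ y ∈ core G, ∀ z, G.Adj x z ↔ z = y := by
  obtain ⟨y, hy⟩ := mem_pendants.1 hx
  refine ⟨y, mem_core.2 fun hyL => ?_, hy⟩
  obtain ⟨y', hy'⟩ := mem_pendants.1 hyL
  have hxy : G.Adj x y := (hy y).2 rfl
  have hx' : x = y' := (hy' x).1 hxy.symm
  obtain ⟨a, ha, b, -, hb, hab⟩ := hG.2 {x, y} (subset_univ _) (by simp) (by
    intro he
    have := card_le_two (a := x) (b := y)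
    rw [he, card_univ] at this
    omega)
  simp only [mem_insert, mem_singleton, not_or] at ha hb
  rcases ha with rfl | rfl
  · exact hb.2 ((hy b).1 hab)
  · exact hb.1 (((hy' b).1 hab).trans hx'.symm)

/-- Deleting the pendant vertices from a connected set keeps it connected. -/
theorem inter_core (hG : Conn G univ) (h3 : 3 ≤ Fintype.card V) {S : Finset V}
    (hS : Conn G S) (hn : (S ∩ core G).Nonempty) : Conn G (S ∩ core G) := by
  refine ⟨hn, fun T hT ⟨t, ht⟩ hne => ?_⟩
  -- Enlarge `T` by the pendant vertices of `S` attached to it, so that the edge leaving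
  -- the enlarged set joins two core vertices.
  obtain ⟨a, ha, b, hb, hbT, hab⟩ := hS.2
    (T ∪ S.filter fun x => x ∈ pendants G ∧ ∃ y ∈ T, G.Adj x y)
    (union_subset (hT.trans inter_subset_left) (filter_subset _ _))
    ⟨t, mem_union_left _ ht⟩ (by
      intro he
      refine hne (Subset.antisymm hT fun x hx => ?_)
      obtain ⟨hxS, hxC⟩ := mem_inter.1 hx
      rw [← he, mem_union, mem_filter] at hxS
      exact hxS.resolve_right fun h => mem_core.1 hxC h.2.1)
  rw [mem_union, mem_filter] at ha hbT
  push Not at hbT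
  obtain ⟨hbT, hbL⟩ := hbT
  have key : ∀ x z y, x ∈ pendants G → G.Adj x y → G.Adj x z → z = y := by
    intro x z y hx h1 h2
    obtain ⟨q, -, hq⟩ := exists_nbr hG h3 hx
    rw [(hq y).1 h1, (hq z).1 h2]
  rcases ha with haT | ⟨_, haL, y, hyT, hay⟩
  · by_cases hbp : b ∈ pendants G
    · exact absurd hab.symm (hbL hb hbp a haT)
    · exact ⟨a, haT, b, mem_inter.2 ⟨hb, mem_core.2 hbp⟩, hbT, hab⟩
  · exact absurd (key a b y haL hay hab ▸ hyT) hbT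

theorem leavesAt_disjoint (hG : Conn G univ) (h3 : 3 ≤ Fintype.card V) (S : Set V) :
    S.PairwiseDisjoint (leavesAt G) := by
  intro u _ v _ huv
  rw [Function.onFun, disjoint_left]
  intro x hxu hxv
  rw [mem_leavesAt] at hxu hxv
  obtain ⟨q, -, hq⟩ := exists_nbr hG h3 hxu.1
  exact huv (((hq u).1 hxu.2).trans ((hq v).1 hxv.2).symm)

theorem card_biUnion_leaves (hG : Conn G univ) (h3 : 3 ≤ Fintype.card V) (S : Finset V) :
    #(S.biUnion (leavesAt G)) = ∑ v ∈ S, wt G v :=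
  card_biUnion (leavesAt_disjoint hG h3 _)

theorem sum_wt_core (hG : Conn G univ) (h3 : 3 ≤ Fintype.card V) :
    ∑ v ∈ core G, wt G v = #(pendants G) := by
  rw [← card_biUnion_leaves hG h3]
  congr 1
  ext x
  rw [mem_biUnion]
  constructor
  · rintro ⟨v, _, hx⟩
    exact (mem_leavesAt.1 hx).1
  · intro hx
    obtain ⟨y, hy, hq⟩ := exists_nbr hG h3 hx
    exact ⟨y, hy, mem_leavesAt.2 ⟨hx, (hq y).2 rfl⟩⟩

theorem Conn.union_leaves {S : Finset V} (hS : Conn G S) {P : Finset V}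
    (hP : P ⊆ S.biUnion (leavesAt G)) : Conn G (S ∪ P) := by
  induction P using Finset.induction_on with
  | empty => simpa using hS
  | insert x P _ ih =>
    obtain ⟨v, hv, hx⟩ := mem_biUnion.1 (hP (mem_insert_self x P))
    rw [union_insert]
    exact (ih ((subset_insert _ _).trans hP)).insert (mem_union_left _ hv)
      (mem_leavesAt.1 hx).2.symm

/-- Connected sets avoiding the core are single pendant vertices; those meeting it in `S'` arise from
`S'` by adding an arbitrary set of pendant vertices attached to `S'`. -/
theorem numCIS_eq (hG : Conn G univ) (h3 : 3 ≤ Fintype.card V) :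
    numCIS G = #(pendants G) + F G (core G) (wt G) := by
  rw [numCIS_eq_card, ← card_filter_add_card_filter_not (fun S => S ∩ core G = ∅)]
  congr 1
  · rw [← card_image_of_injective (pendants G) (singleton_injective (α := V))]
    congr 1
    ext S
    rw [mem_filter, mem_conns, mem_image]
    constructor
    · rintro ⟨⟨-, hS⟩, he⟩
      have hSL : ∀ x ∈ S, x ∈ pendants G := by
        intro x hx
        by_contra h
        have : x ∈ S ∩ core G := mem_inter.2 ⟨hx, mem_core.2 h⟩
        simp [he] at this
      obtain ⟨x, hx⟩ := hS.1
      refine ⟨x, hSL x hx, ?_⟩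
      by_contra hne
      obtain ⟨a, ha, b, hb, -, hab⟩ := hS.2 {x} (by simpa using hx) (by simp) hne
      rw [mem_singleton] at ha
      subst ha
      obtain ⟨y, hy, hq⟩ := exists_nbr hG h3 (hSL a hx)
      exact mem_core.1 hy ((hq b).1 hab ▸ hSL b hb)
    · rintro ⟨x, hx, rfl⟩
      refine ⟨⟨subset_univ _, conn_singleton x⟩, ?_⟩
      rw [singleton_inter_of_notMem]
      exact fun h => mem_core.1 h hx
  · rw [card_eq_sum_card_fiberwise (f := fun S => S ∩ core G) (t := conns G (core G)), F]
    · refine sum_congr rfl fun S' hS' => ?_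
      obtain ⟨hS'C, hS'⟩ := mem_conns.1 hS'
      have hAL : ∀ x ∈ S'.biUnion (leavesAt G), x ∉ core G := by
        intro x hx h
        obtain ⟨v, _, hx⟩ := mem_biUnion.1 hx
        exact mem_core.1 h (mem_leavesAt.1 hx).1
      have hcap : ∀ P ⊆ S'.biUnion (leavesAt G), (S' ∪ P) ∩ core G = S' := by
        intro P hP
        ext x
        rw [mem_inter, mem_union]
        exact ⟨fun h => h.1.resolve_right fun hx => hAL x (hP hx) h.2,
          fun h => ⟨Or.inl h, hS'C h⟩⟩
      rw [← card_biUnion_leaves hG h3, ← card_powerset,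
        ← card_image_of_injOn (s := (S'.biUnion (leavesAt G)).powerset) (f := fun P => S' ∪ P)]
      · congr 1
        ext S
        simp only [mem_filter, mem_conns, mem_image, mem_powerset]
        constructor
        · rintro ⟨⟨⟨-, hS⟩, hne⟩, rfl⟩
          refine ⟨S \ core G, ?_, ?_⟩
          · intro x hx
            obtain ⟨hxS, hxC⟩ := mem_sdiff.1 hx
            have hxL : x ∈ pendants G := by
              by_contra h
              exact hxC (mem_core.2 h)
            obtain ⟨a, ha, b, hb, -, hab⟩ := hS.2 {x} (by simpa using hxS) (by simp) (by
              rintro rfl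
              obtain ⟨z, hz⟩ := hS'.1
              rw [mem_inter, mem_singleton] at hz
              exact hxC (hz.1 ▸ hz.2))
            rw [mem_singleton] at ha
            subst ha
            obtain ⟨y, hy, hq⟩ := exists_nbr hG h3 hxL
            have hby := (hq b).1 hab
            exact mem_biUnion.2 ⟨b, mem_inter.2 ⟨hb, hby ▸ hy⟩, mem_leavesAt.2 ⟨hxL, hab⟩⟩
          · ext x
            simp only [mem_union, mem_inter, mem_sdiff]
            tauto
        · rintro ⟨P, hP, rfl⟩
          refine ⟨⟨⟨subset_univ _, hS'.union_leaves hP⟩, ?_⟩, hcap P hP⟩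
          rw [hcap P hP]
          exact hS'.1.ne_empty
      · intro P hP Q hQ he
        simp only [coe_powerset, Set.mem_preimage, Set.mem_powerset_iff, coe_subset] at hP hQ
        have hd : ∀ R ⊆ S'.biUnion (leavesAt G), (S' ∪ R) \ S' = R := by
          intro R hR
          ext x
          rw [mem_sdiff, mem_union]
          refine ⟨fun h => h.1.resolve_left h.2, fun h => ⟨Or.inr h, fun hx => ?_⟩⟩
          exact hAL x (hR h) (hS'C hx)
        rw [← hd P hP, ← hd Q hQ]
        simp only at he
        rw [he]
    · intro S hS
      simp only [coe_filter, Set.mem_ofPred_eq, mem_conns] at hS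
      rw [mem_coe, mem_conns]
      exact ⟨inter_subset_right, inter_core hG h3 hS.1.2 (nonempty_iff_ne_empty.2 hS.2)⟩


/-! ### Comparison with the tree `T¹(n, p)` -/

theorem T1_adj {n p : ℕ} {a b : Fin n} : (T1 n p).Adj a b ↔ a.val ≠ b.val ∧
    (((b.val = a.val + 1 ∧ b.val ≤ n - p - 1) ∨
    (a.val = 0 ∧ n - p ≤ b.val ∧ b.val < n - p + p / 2) ∨
    (a.val = n - p - 1 ∧ n - p + p / 2 ≤ b.val)) ∨
    ((a.val = b.val + 1 ∧ a.val ≤ n - p - 1) ∨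
    (b.val = 0 ∧ n - p ≤ a.val ∧ a.val < n - p + p / 2) ∨
    (b.val = n - p - 1 ∧ n - p + p / 2 ≤ a.val))) := by
  rw [T1, SimpleGraph.fromRel_adj, ne_eq, Fin.ext_iff]

/-- A path core with `⌊p/2⌋` pendant vertices at one end and `⌈p/2⌉` at the other gives `T¹(n, p)`:
number the path, then the pendant vertices at its first end, then those at its last end. -/
theorem iso_of_isPath (hG : Conn G univ) (h3 : 3 ≤ Fintype.card V) {n p m : ℕ}
    (hn : Fintype.card V = n) (hm : 1 ≤ m) (hnp : n = m + 1 + p) {f : ℕ → V}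
    (hf : IsPath G (core G) (wt G) m f) (h0 : wt G (f 0) = p / 2)
    (h1 : wt G (f m) = (p + 1) / 2) : Nonempty (G ≃g T1 n p) := by
  obtain ⟨e₀, he₀, hi₀⟩ := exists_enum _ _ h0 (f 0)
  obtain ⟨e₁, he₁, hi₁⟩ := exists_enum _ _ h1 (f 0)
  have hfc : ∀ i ≤ m, f i ∈ core G := fun i hi => (hf.mem _).2 ⟨i, hi, rfl⟩
  have hlf : ∀ x k, k ≤ m → x ∈ leavesAt G (f k) → ∀ i ≤ m, (G.Adj x (f i) ↔ i = k) := by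
    intro x k hk hx i hi
    obtain ⟨hxp, hxk⟩ := mem_leavesAt.1 hx
    obtain ⟨y, _, hq⟩ := exists_nbr hG h3 hxp
    rw [hq, ← (hq _).1 hxk]
    exact ⟨hf.inj i hi k hk, fun h => by rw [h]⟩
  have hll : ∀ x y, x ∈ pendants G → y ∈ pendants G → ¬ G.Adj x y := by
    intro x y hx hy hxy
    obtain ⟨z, hz, hq⟩ := exists_nbr hG h3 hx
    exact mem_core.1 hz ((hq y).1 hxy ▸ hy)
  let g : Fin n → V := fun i => if i.val < m + 1 then f i.val else
    if i.val < m + 1 + p / 2 then e₀ (i.val - (m + 1)) else e₁ (i.val - (m + 1 + p / 2))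
  have hcases : ∀ i : Fin n, (i.val ≤ m ∧ g i = f i.val) ∨
      (m + 1 ≤ i.val ∧ i.val < m + 1 + p / 2 ∧ g i = e₀ (i.val - (m + 1)) ∧
        g i ∈ leavesAt G (f 0)) ∨
      (m + 1 + p / 2 ≤ i.val ∧ g i = e₁ (i.val - (m + 1 + p / 2)) ∧
        g i ∈ leavesAt G (f m)) := by
    intro i
    have := i.2
    rcases lt_or_ge i.val (m + 1) with h | h
    · exact Or.inl ⟨by omega, if_pos h⟩
    rcases lt_or_ge i.val (m + 1 + p / 2) with h' | h'
    · have : g i = e₀ (i.val - (m + 1)) := (if_neg (not_lt.2 h)).trans (if_pos h')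
      exact Or.inr (Or.inl ⟨h, h', this, this ▸ he₀ _ (by omega)⟩)
    · have : g i = e₁ (i.val - (m + 1 + p / 2)) := (if_neg (not_lt.2 h)).trans (if_neg (not_lt.2 h'))
      exact Or.inr (Or.inr ⟨h', this, this ▸ he₁ _ (by omega)⟩)
  have hfl : ∀ x i k, i ≤ m → x ∈ leavesAt G (f k) → f i ≠ x := fun x i k hi hx he =>
    mem_core.1 (hfc i hi) (he ▸ (mem_leavesAt.1 hx).1)
  have hl01 : ∀ x, x ∈ leavesAt G (f 0) → x ∉ leavesAt G (f m) := by
    intro x hx hx'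
    have := (hlf x 0 (by omega) hx m le_rfl).1 (mem_leavesAt.1 hx').2
    omega
  have hinj : Function.Injective g := by
    intro i j he
    have := i.2
    have := j.2
    ext
    rcases hcases i with ⟨hi, hgi⟩ | ⟨hi, hi', hgi, hl⟩ | ⟨hi, hgi, hl⟩ <;>
    rcases hcases j with ⟨hj, hgj⟩ | ⟨hj, hj', hgj, hl'⟩ | ⟨hj, hgj, hl'⟩
    · exact hf.inj _ hi _ hj (by rw [← hgi, ← hgj, he])
    · exact absurd (hgi ▸ he) (hfl _ _ _ hi hl')
    · exact absurd (hgi ▸ he) (hfl _ _ _ hi hl')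
    · exact absurd (hgj ▸ he.symm) (hfl _ _ _ hj hl)
    · have := hi₀ (i.val - (m + 1)) (by omega) (j.val - (m + 1)) (by omega) (by rw [← hgi, ← hgj, he])
      omega
    · exact absurd (he ▸ hl') (hl01 _ hl)
    · exact absurd (hgj ▸ he.symm) (hfl _ _ _ hj hl)
    · exact absurd (he ▸ hl) (hl01 _ hl')
    · have := hi₁ (i.val - (m + 1 + p / 2)) (by omega) (j.val - (m + 1 + p / 2)) (by omega) (by rw [← hgi, ← hgj, he])
      omega
  have hbij : Function.Bijective g :=
    (Fintype.bijective_iff_injective_and_card g).2 ⟨hinj, by simp [hn]⟩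
  refine ⟨RelIso.symm ⟨Equiv.ofBijective g hbij, ?_⟩⟩
  intro i j
  simp only [Equiv.ofBijective_apply]
  rw [T1_adj]
  have := i.2
  have := j.2
  rcases hcases i with ⟨hi, hgi⟩ | ⟨hi, hi', hgi, hl⟩ | ⟨hi, hgi, hl⟩ <;>
  rcases hcases j with ⟨hj, hgj⟩ | ⟨hj, hj', hgj, hl'⟩ | ⟨hj, hgj, hl'⟩
  · rw [hgi, hgj, hf.adj _ hi _ hj]
    omega
  · rw [hgi, G.adj_comm, hlf _ _ (by omega) hl' _ hi]
    omega
  · rw [hgi, G.adj_comm, hlf _ _ (by omega) hl' _ hi]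
    omega
  · rw [hgj, hlf _ _ (by omega) hl _ hj]
    omega
  · have := hll _ _ (mem_leavesAt.1 hl).1 (mem_leavesAt.1 hl').1
    simp only [this, false_iff]
    omega
  · have := hll _ _ (mem_leavesAt.1 hl).1 (mem_leavesAt.1 hl').1
    simp only [this, false_iff]
    omega
  · rw [hgj, hlf _ _ (by omega) hl _ hj]
    omega
  · have := hll _ _ (mem_leavesAt.1 hl).1 (mem_leavesAt.1 hl').1
    simp only [this, false_iff]
    omega
  · have := hll _ _ (mem_leavesAt.1 hl).1 (mem_leavesAt.1 hl').1
    simp only [this, false_iff]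
    omega

/-- The core of a graph isomorphic to `T¹(n, p)`. The `p` vertices outside the spine are pendant, and
as `G` has only `p` pendant vertices, the spine is the core. -/
theorem isPath_of_iso {n p m : ℕ} (hm : 1 ≤ m) (hnp : n = m + 1 + p)
    (hp : #(pendants G) = p) (φ : G ≃g T1 n p) :
    ∃ f, IsPath G (core G) (wt G) m f ∧ wt G (f 0) = p / 2 ∧ wt G (f m) = (p + 1) / 2 := by
  let f : ℕ → V := fun i => if h : i < n then φ.symm ⟨i, h⟩ else φ.symm ⟨0, by omega⟩
  have hff : ∀ i (h : i < n), f i = φ.symm ⟨i, h⟩ := fun i h => dif_pos h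
  have hinj : ∀ i < n, ∀ j < n, f i = f j → i = j := by
    intro i hi j hj he
    rw [hff i hi, hff j hj] at he
    simpa using φ.symm.injective he
  have hsurj : ∀ x, ∃ i < n, f i = x := fun x => ⟨(φ x).1, (φ x).2, by simp [hff _ (φ x).2]⟩
  have hadj : ∀ i j, ∀ (hi : i < n) (hj : j < n),
      (G.Adj (f i) (f j) ↔ (T1 n p).Adj ⟨i, hi⟩ ⟨j, hj⟩) := by
    intro i j hi hj
    rw [hff i hi, hff j hj, φ.symm.map_adj_iff]
  have hcard : ∀ a b, b ≤ n → #((Ico a b).image f) = b - a := by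
    intro a b hb
    rw [card_image_of_injOn, Nat.card_Ico]
    intro i hi j hj he
    simp only [coe_Ico, Set.mem_Ico] at hi hj
    exact hinj i (by omega) j (by omega) he
  have hpend : (Ico (m + 1) n).image f = pendants G := by
    apply eq_of_subset_of_card_le
    · intro x hx
      obtain ⟨i, hi, rfl⟩ := mem_image.1 hx
      rw [mem_Ico] at hi
      rw [mem_pendants]
      refine ⟨f (if i < m + 1 + p / 2 then 0 else m), fun z => ?_⟩
      obtain ⟨j, hj, rfl⟩ := hsurj z
      rw [hadj i j hi.2 hj, T1_adj]
      simp only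
      split_ifs with h
      · constructor
        · intro h
          congr 1
          omega
        · intro h
          have := hinj _ hj _ (by omega) h
          omega
      · constructor
        · intro h
          congr 1
          omega
        · intro h
          have := hinj _ hj _ (by omega) h
          omega
    · rw [hp, hcard _ _ le_rfl]
      omega
  have hleaf : ∀ i < n, ∀ x, x ∈ leavesAt G (f i) ↔ ∃ j, ∃ (hi : i < n) (hj : j < n), m + 1 ≤ j ∧
      f j = x ∧ (T1 n p).Adj ⟨j, hj⟩ ⟨i, hi⟩ := by
    intro i hi x
    rw [mem_leavesAt, ← hpend, mem_image]
    constructor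
    · rintro ⟨⟨j, hj, rfl⟩, h⟩
      rw [mem_Ico] at hj
      exact ⟨j, hi, hj.2, hj.1, rfl, (hadj _ _ _ _).1 h⟩
    · rintro ⟨j, hi, hj, hmj, rfl, h⟩
      exact ⟨⟨j, mem_Ico.2 ⟨hmj, hj⟩, rfl⟩, (hadj _ _ _ _).2 h⟩
  refine ⟨f, ⟨?_, ?_, ?_, ?_⟩, ?_, ?_⟩
  · exact fun i hi j hj => hinj i (by omega) j (by omega)
  · intro x
    rw [mem_core, ← hpend, mem_image]
    constructor
    · intro h
      obtain ⟨i, hi, rfl⟩ := hsurj x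
      refine ⟨i, ?_, rfl⟩
      by_contra hlt
      exact h ⟨i, mem_Ico.2 ⟨by omega, hi⟩, rfl⟩
    · rintro ⟨i, hi, rfl⟩ ⟨j, hj, he⟩
      rw [mem_Ico] at hj
      have := hinj j hj.2 i (by omega) he
      omega
  · intro i hi j hj
    rw [hadj i j (by omega) (by omega), T1_adj]
    simp only
    omega
  · intro i h0 hm
    rw [wt, card_eq_zero, eq_empty_iff_forall_notMem]
    intro x hx
    obtain ⟨j, _, _, h1, _, h2⟩ := (hleaf i (by omega) x).1 hx
    rw [T1_adj] at h2
    simp only at h2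
    omega
  · have : leavesAt G (f 0) = (Ico (m + 1) (m + 1 + p / 2)).image f := by
      ext x
      rw [hleaf 0 (by omega), mem_image]
      constructor
      · rintro ⟨j, hi, hj, h1, rfl, h2⟩
        rw [T1_adj] at h2
        simp only at h2
        exact ⟨j, mem_Ico.2 (by omega), rfl⟩
      · rintro ⟨j, hj, rfl⟩
        rw [mem_Ico] at hj
        refine ⟨j, by omega, by omega, hj.1, rfl, ?_⟩
        rw [T1_adj]
        simp only [true_and]
        omega
    rw [wt, this, hcard _ _ (by omega)]
    omega
  · have : leavesAt G (f m) = (Ico (m + 1 + p / 2) n).image f := by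
      ext x
      rw [hleaf m (by omega), mem_image]
      constructor
      · rintro ⟨j, hi, hj, h1, rfl, h2⟩
        rw [T1_adj] at h2
        simp only at h2
        exact ⟨j, mem_Ico.2 (by omega), rfl⟩
      · rintro ⟨j, hj, rfl⟩
        rw [mem_Ico] at hj
        refine ⟨j, by omega, by omega, by omega, rfl, ?_⟩
        rw [T1_adj]
        simp only
        omega
    rw [wt, this, hcard _ _ le_rfl]
    omega

/-- The statement with `n = m + 1 + p`, which avoids truncated subtraction. -/
theorem main {m p : ℕ} (hm : 1 ≤ m) (hp : 2 ≤ p) (hG : Conn G univ)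
    (hcard : Fintype.card V = m + 1 + p) (hpend : #(pendants G) = p) :
    2 ^ p + m * (2 ^ (p / 2) + 2 ^ ((p + 1) / 2)) + p + m * (m - 1) / 2 ≤ numCIS G ∧
    (numCIS G = 2 ^ p + m * (2 ^ (p / 2) + 2 ^ ((p + 1) / 2)) + p + m * (m - 1) / 2 ↔
      Nonempty (G ≃g T1 (m + 1 + p) p)) := by
  have h3 : 3 ≤ Fintype.card V := by omega
  have hcc : #(core G) = m + 1 := by
    rw [core, card_compl, hcard, hpend]
    omega
  have hcore : Conn G (core G) := by
    have hn : (univ ∩ core G).Nonempty := by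
      rw [univ_inter, ← card_pos]
      omega
    simpa using inter_core hG h3 hG hn
  have hsum : ∑ v ∈ core G, wt G v = p := by rw [sum_wt_core hG h3, hpend]
  obtain ⟨h1, h2⟩ := F_lower m (core G) (wt G) p hcore hcc hsum
  rw [numCIS_eq hG h3, hpend]
  refine ⟨by omega, ?_, ?_⟩
  · intro heq
    obtain ⟨f, hf, hf0⟩ := h2 (by omega)
    have hs := hf.sum_eq hm
    rcases hf0 hm with h | h
    · exact iso_of_isPath hG h3 hcard hm rfl hf h (by omega)
    · refine iso_of_isPath hG h3 hcard hm rfl hf.reverse ?_ ?_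
      · simp only [Nat.sub_zero]
        omega
      · simp only [Nat.sub_self]
        omega
  · rintro ⟨φ⟩
    obtain ⟨f, hf, hf0, hfm⟩ := isPath_of_iso hm rfl hpend φ
    have hu := F_upper hf hm
    rw [hf0, hfm, show p / 2 + (p + 1) / 2 = p by omega] at hu
    omega

end Pendant
end
end ConnSub

theorem stmt_12 {V : Type*} [Fintype V] (n p : ℕ) (hn : 4 ≤ n) (hp : 2 ≤ p)
    (hp2 : p ≤ n - 2) (G : SimpleGraph V) (hconn : G.Connected)
    (hcard : Fintype.card V = n) (hpend : numPendant G = p) :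
    2 ^ p + (n - p - 1) * (2 ^ (p / 2) + 2 ^ ((p + 1) / 2)) + p +
        (n - p - 1) * (n - p - 2) / 2 ≤ numCIS G ∧
    (numCIS G = 2 ^ p + (n - p - 1) * (2 ^ (p / 2) + 2 ^ ((p + 1) / 2)) + p +
        (n - p - 1) * (n - p - 2) / 2 ↔ Nonempty (G ≃g T1 n p)) := by
  obtain ⟨m, rfl⟩ : ∃ m, n = m + 1 + p := ⟨n - p - 1, by omega⟩
  rw [show m + 1 + p - p - 1 = m by omega, show m + 1 + p - p - 2 = m - 1 by omega]
  refine ConnSub.main (by omega) hp ?_ hcard (by rw [ConnSub.card_pendants, hpend])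
  rw [← ConnSub.connected_iff_conn, Finset.coe_univ]
  exact (SimpleGraph.induceUnivIso G).connected_iff.2 hconn
end
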